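/- arXiv:1807.10017 — 2 statements merged into one kernel-verified Lean document; each statement's English description precedes it below -/
import Mathlib

section
/- Let A>0 and B∈ℝ with A+B<0, and let (x_n)_{n≥n₀} be the unique zeros of ζ_n in (0,1) (which exist for all sufficiently large n). Then, as n→∞, x_n=1−κ/n+c_κ/n²+o(1/n²), where κ=−2(A+B)/A and c_κ=κ²−2+2∫₀^∞ e^{−κτ}(1+τ)^{−2}dτ. -/
open MeasureTheory Real Set Filter Asymptotics

/-- Rising factorial (Pochhammer symbol) `(a)_k`. -/
noncomputable def poch (a : ℝ) (k : ℕ) : ℝ := (ascPochhammer ℝ k).eval a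

/-- Gauss hypergeometric function `F(a,b;c;x)`: given by Euler's integral representation
when `c > b > 0` (valid for all `x ∈ (-∞,1]`), and by the defining power series otherwise. -/
noncomputable def hyper (a b c x : ℝ) : ℝ :=
  if b < c ∧ 0 < b then
    Real.Gamma c / (Real.Gamma b * Real.Gamma (c - b)) *
      ∫ t in (0:ℝ)..1, t ^ (b - 1) * (1 - t) ^ (c - b - 1) * (1 - x * t) ^ (-a)
  else
    ∑' k : ℕ, poch a k * poch b k / (poch c k * (Nat.factorial k)) * x ^ k

/-- The coefficient `a_t = (t - √(t²+8))/2`. -/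
noncomputable def aCoef (t : ℝ) : ℝ := (t - Real.sqrt (t ^ 2 + 8)) / 2

/-- The coefficient `b_t = (t + √(t²+8))/2`. -/
noncomputable def bCoef (t : ℝ) : ℝ := (t + Real.sqrt (t ^ 2 + 8)) / 2

/-- `F_t(x) = F(a_t, b_t; t+1; x)`. -/
noncomputable def Fhyp (t x : ℝ) : ℝ := hyper (aCoef t) (bCoef t) (t + 1) x

/-- The dispersion function `ζ_n` associated with the quadratic profile `f₀(r) = Ar² + B`. -/
noncomputable def zetaDisp (A B : ℝ) (n : ℕ) (x : ℝ) : ℝ :=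
  Fhyp n x * (1 - x + (A + 2 * B) / (A * ((n : ℝ) + 1)) * x)
    + ∫ τ in (0:ℝ)..1, Fhyp n (τ * x) * τ ^ n * (-1 + 2 * x * τ)

/-- `κ = -2(A+B)/A`. -/
noncomputable def kap (A B : ℝ) : ℝ := -2 * (A + B) / A

/-- `c_κ = κ² - 2 + 2∫₀^∞ e^{-κτ}(1+τ)^{-2} dτ`. -/
noncomputable def ckap (A B : ℝ) : ℝ :=
  kap A B ^ 2 - 2 + 2 * ∫ τ in Set.Ioi (0:ℝ), Real.exp (-kap A B * τ) / (1 + τ) ^ 2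

open Topology

/-- exponential integral, up to sign -/
noncomputable def expE (a : ℝ) : ℝ :=
  (∫ w in Ioi (1:ℝ), Real.exp (-w) / w) - ∫ w in (1:ℝ)..a, Real.exp (-w) / w

lemma expE_integrable : IntegrableOn (fun w : ℝ => Real.exp (-w) / w) (Ioi 1) := by
  have h : IntegrableOn (fun w : ℝ => Real.exp (-w)) (Ioi 1) := integrableOn_exp_neg_Ioi 1
  refine Integrable.mono' h ?_ ?_
  · refine ContinuousOn.aestronglyMeasurable ?_ measurableSet_Ioi
    refine ContinuousOn.div (by fun_prop) (by fun_prop) ?_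
    intro x hx; have : (1:ℝ) < x := hx; linarith
  · refine (ae_restrict_mem measurableSet_Ioi).mono ?_
    intro x hx
    have hx : (1:ℝ) < x := hx
    rw [Real.norm_of_nonneg (by positivity)]
    exact div_le_self (Real.exp_pos _).le hx.le

lemma expE_hasDerivAt {a : ℝ} (ha : 0 < a) : HasDerivAt expE (-(Real.exp (-a) / a)) a := by
  have hc : ContinuousOn (fun w : ℝ => Real.exp (-w) / w) (Ioi 0) := by
    refine ContinuousOn.div (by fun_prop) (by fun_prop) ?_
    intro x hx; exact ne_of_gt hx
  have : HasDerivAt (fun a => ∫ w in (1:ℝ)..a, Real.exp (-w) / w) (Real.exp (-a) / a) a := by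
    refine intervalIntegral.integral_hasDerivAt_right ?_ ?_ ?_
    · refine (hc.mono ?_).intervalIntegrable
      intro x hx
      have := hx.1
      have h1 : (0:ℝ) < min 1 a := lt_min one_pos ha
      exact lt_of_lt_of_le h1 this
    · exact hc.stronglyMeasurableAtFilter isOpen_Ioi _ ha
    · exact hc.continuousAt (Ioi_mem_nhds ha)
  exact this.const_sub (∫ w in Ioi (1:ℝ), Real.exp (-w) / w)

lemma expE_tendsto : Tendsto expE atTop (𝓝 0) := by
  have := intervalIntegral_tendsto_integral_Ioi 1 expE_integrable tendsto_id
  have h2 := this.const_sub (∫ w in Ioi (1:ℝ), Real.exp (-w) / w)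
  rw [sub_self] at h2
  exact h2

lemma nonneg_of_deriv_nonpos {f f' : ℝ → ℝ} (hf : ∀ x, 1 ≤ x → HasDerivAt f (f' x) x)
    (hf' : ∀ x, 1 ≤ x → f' x ≤ 0) (hl : Tendsto f atTop (𝓝 0)) {a : ℝ} (ha : 1 ≤ a) :
    0 ≤ f a := by
  have hanti : AntitoneOn f (Ici 1) := by
    refine antitoneOn_of_deriv_nonpos (convex_Ici 1) ?_ ?_ ?_
    · intro x hx
      exact (hf x hx).continuousAt.continuousWithinAt
    · intro x hx
      rw [interior_Ici] at hx
      exact (hf x (le_of_lt hx)).differentiableAt.differentiableWithinAt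
    · intro x hx
      rw [interior_Ici] at hx
      rw [(hf x (le_of_lt hx)).deriv]
      exact hf' x (le_of_lt hx)
  refine le_of_tendsto hl ?_
  filter_upwards [eventually_ge_atTop a] with b hb
  exact hanti ha (le_trans ha hb) hb

lemma expE_nonneg {a : ℝ} (ha : 1 ≤ a) : 0 ≤ expE a := by
  refine nonneg_of_deriv_nonpos (fun x hx => expE_hasDerivAt (by linarith)) ?_ expE_tendsto ha
  intro x hx
  have : 0 < Real.exp (-x) / x := by positivity
  linarith

lemma exp_neg_tendsto : Tendsto (fun x : ℝ => Real.exp (-x)) atTop (𝓝 0) :=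
  Real.tendsto_exp_neg_atTop_nhds_zero

lemma expE_le {a : ℝ} (ha : 1 ≤ a) : expE a ≤ Real.exp (-a) := by
  have := nonneg_of_deriv_nonpos (f := fun x => Real.exp (-x) - expE x)
    (f' := fun x => -Real.exp (-x) - -(Real.exp (-x) / x)) ?_ ?_ ?_ ha
  · simpa using this
  · intro x hx
    have h1 : HasDerivAt (fun x : ℝ => Real.exp (-x)) (-Real.exp (-x)) x := by
      simpa using (hasDerivAt_neg x).exp
    exact h1.sub (expE_hasDerivAt (by linarith))
  · intro x hx
    have : Real.exp (-x) / x ≤ Real.exp (-x) := div_le_self (Real.exp_pos _).le hx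
    linarith
  · simpa using exp_neg_tendsto.sub expE_tendsto

lemma mul_expE_tendsto : Tendsto (fun a => a * expE a) atTop (𝓝 0) := by
  have h : Tendsto (fun x : ℝ => x * Real.exp (-x)) atTop (𝓝 0) := by
    simpa using Real.tendsto_pow_mul_exp_neg_atTop_nhds_zero 1
  refine squeeze_zero' ?_ ?_ h
  · filter_upwards [eventually_ge_atTop 1] with a ha
    exact mul_nonneg (by linarith) (expE_nonneg ha)
  · filter_upwards [eventually_ge_atTop 1] with a ha
    exact mul_le_mul_of_nonneg_left (expE_le ha) (by linarith)

/-- the constant in closed form -/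
lemma J_eq {k : ℝ} (hk : 0 < k) :
    ∫ τ in Ioi (0:ℝ), Real.exp (-k * τ) / (1 + τ) ^ 2 = 1 - k * Real.exp k * expE k := by
  have hd : ∀ τ ∈ Ici (0:ℝ), HasDerivAt
      (fun τ : ℝ => -(Real.exp (-k * τ) / (1 + τ)) + k * Real.exp k * expE (k * (1 + τ)))
      (Real.exp (-k * τ) / (1 + τ) ^ 2) τ := by
    intro τ hτ
    have hτ : (0:ℝ) ≤ τ := hτ
    have h1 : HasDerivAt (fun τ : ℝ => Real.exp (-k * τ)) (Real.exp (-k * τ) * (-k)) τ := by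
      simpa using ((hasDerivAt_id τ).const_mul (-k)).exp
    have h2 : HasDerivAt (fun τ : ℝ => 1 + τ) 1 τ := (hasDerivAt_id τ).const_add 1
    have h3 := (h1.div h2 (by linarith)).neg
    have h4 : HasDerivAt (fun τ : ℝ => k * (1 + τ)) (k * 1) τ := h2.const_mul k
    have h5 := ((expE_hasDerivAt (a := k * (1 + τ)) (by positivity)).comp τ h4).const_mul
      (k * Real.exp k)
    refine (h3.add h5).congr_deriv ?_
    have e : Real.exp (-(k * (1 + τ))) = Real.exp (-k * τ) / Real.exp k := by
      rw [← Real.exp_sub]; congr 1; ring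
    rw [e]
    have := Real.exp_pos k
    field_simp
    ring
  have hl : Tendsto (fun τ : ℝ => -(Real.exp (-k * τ) / (1 + τ))
      + k * Real.exp k * expE (k * (1 + τ))) atTop (𝓝 0) := by
    have ht : Tendsto (fun τ : ℝ => k * (1 + τ)) atTop atTop :=
      (tendsto_atTop_add_const_left _ 1 tendsto_id).const_mul_atTop hk
    have h1 : Tendsto (fun τ : ℝ => Real.exp (-k * τ) / (1 + τ)) atTop (𝓝 0) := by
      refine Tendsto.div_atTop (a := 0) ?_ (tendsto_atTop_add_const_left _ 1 tendsto_id)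
      have := exp_neg_tendsto.comp ((tendsto_id (α := ℝ) (x := atTop)).const_mul_atTop hk)
      refine this.congr ?_
      intro x; simp
    simpa using h1.neg.add ((expE_tendsto.comp ht).const_mul (k * Real.exp k))
  have hderInt := integrableOn_Ioi_deriv_of_nonneg' hd (fun x hx => by positivity) hl
  rw [integral_Ioi_of_hasDerivAt_of_tendsto' hd hderInt hl]
  simp
  ring

/-- the limiting inner integrand -/
noncomputable def Lfun (k u : ℝ) : ℝ :=
  ∫ v in Ioi (0:ℝ), Real.exp (-v) * Real.log ((k + u + v) / (k + v))

lemma Lfun_eq {k u : ℝ} (hk : 0 < k) (hu : 0 ≤ u) :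
    Lfun k u = Real.log (k + u) - Real.log k + Real.exp (k + u) * expE (k + u)
      - Real.exp k * expE k := by
  have hd0 : ∀ a : ℝ, 0 < a → ∀ v ∈ Ici (0:ℝ), HasDerivAt
      (fun v : ℝ => -(Real.exp (-v) * Real.log (a + v)) - Real.exp a * expE (a + v))
      (Real.exp (-v) * Real.log (a + v)) v := by
    intro a ha v hv
    have hv : (0:ℝ) ≤ v := hv
    have h1 : HasDerivAt (fun x : ℝ => Real.exp (-x)) (-Real.exp (-v)) v := by
      simpa using (hasDerivAt_neg v).exp
    have h2 : HasDerivAt (fun v : ℝ => a + v) 1 v := (hasDerivAt_id v).const_add a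
    have h3 := h2.log (by positivity)
    have h5 := ((expE_hasDerivAt (a := a + v) (by positivity)).comp v h2).const_mul
      (Real.exp a)
    refine ((h1.mul h3).neg.sub h5).congr_deriv ?_
    have e : Real.exp (-(a + v)) = Real.exp (-v) / Real.exp a := by
      rw [← Real.exp_sub]; congr 1; ring
    rw [e]
    have := Real.exp_pos a
    field_simp
    ring
  have hlog : ∀ a : ℝ, 0 < a → Tendsto (fun v : ℝ => Real.exp (-v) * Real.log (a + v))
      atTop (𝓝 0) := by
    intro a ha
    have h : Tendsto (fun x : ℝ => Real.exp (-x) * (a + x)) atTop (𝓝 0) := by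
      have h1 : Tendsto (fun x : ℝ => x * Real.exp (-x)) atTop (𝓝 0) := by
        simpa using Real.tendsto_pow_mul_exp_neg_atTop_nhds_zero 1
      have := (exp_neg_tendsto.const_mul a).add h1
      simp only [mul_zero, add_zero] at this
      refine this.congr ?_
      intro x; ring
    refine squeeze_zero' ?_ ?_ h
    · filter_upwards [eventually_ge_atTop 1] with x hx
      exact mul_nonneg (Real.exp_pos _).le (Real.log_nonneg (by linarith))
    · filter_upwards [eventually_ge_atTop 1] with x hx
      refine mul_le_mul_of_nonneg_left ?_ (Real.exp_pos _).le
      exact Real.log_le_self (by linarith)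
  have hl0 : ∀ a : ℝ, 0 < a → Tendsto
      (fun v : ℝ => -(Real.exp (-v) * Real.log (a + v)) - Real.exp a * expE (a + v))
      atTop (𝓝 0) := by
    intro a ha
    have h1 := (expE_tendsto.comp (tendsto_atTop_add_const_left atTop a tendsto_id)).const_mul
      (Real.exp a)
    simpa using (hlog a ha).neg.sub h1
  have hd : ∀ v ∈ Ici (0:ℝ), HasDerivAt
      (fun v : ℝ => (-(Real.exp (-v) * Real.log (k + u + v))
          - Real.exp (k + u) * expE (k + u + v))
        - (-(Real.exp (-v) * Real.log (k + v)) - Real.exp k * expE (k + v)))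
      (Real.exp (-v) * Real.log ((k + u + v) / (k + v))) v := by
    intro v hv
    have hv' : (0:ℝ) ≤ v := hv
    refine ((hd0 (k + u) (by positivity) v hv).sub (hd0 k hk v hv)).congr_deriv ?_
    rw [Real.log_div (by positivity) (by positivity)]
    ring
  have hl := (hl0 (k + u) (by positivity)).sub (hl0 k hk)
  have hderInt := integrableOn_Ioi_deriv_of_nonneg' hd (fun x hx => by
    have hx : (0:ℝ) < x := hx
    refine mul_nonneg (Real.exp_pos _).le (Real.log_nonneg ?_)
    rw [le_div_iff₀ (by positivity)]; linarith) hl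
  rw [Lfun, integral_Ioi_of_hasDerivAt_of_tendsto' hd hderInt hl]
  simp
  ring

lemma Lfun_nonneg {k u : ℝ} (hk : 0 < k) (hu : 0 ≤ u) : 0 ≤ Lfun k u := by
  refine setIntegral_nonneg measurableSet_Ioi ?_
  intro x hx
  have hx : (0:ℝ) < x := hx
  refine mul_nonneg (Real.exp_pos _).le (Real.log_nonneg ?_)
  rw [le_div_iff₀ (by positivity)]; linarith

/-- the double integral -/
lemma Q_eq {k : ℝ} (hk : 0 < k) :
    ∫ u in Ioi (0:ℝ), Real.exp (-u) * Lfun k u = 1 - k * Real.exp k * expE k := by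
  set Le : ℝ → ℝ := fun u => Real.log (k + u) - Real.log k + Real.exp (k + u) * expE (k + u)
      - Real.exp k * expE k with hLe
  have hcongr : ∫ u in Ioi (0:ℝ), Real.exp (-u) * Lfun k u
      = ∫ u in Ioi (0:ℝ), Real.exp (-u) * Le u := by
    refine setIntegral_congr_fun measurableSet_Ioi ?_
    intro u hu
    simp only [hLe]
    rw [Lfun_eq hk (le_of_lt hu)]
  have hd : ∀ u ∈ Ici (0:ℝ), HasDerivAt
      (fun u : ℝ => -(Real.exp (-u) * Le u)
        + Real.exp k * ((k + u) * expE (k + u) - Real.exp (-(k + u))))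
      (Real.exp (-u) * Le u) u := by
    intro u hu
    have hu : (0:ℝ) ≤ u := hu
    have h1 : HasDerivAt (fun x : ℝ => Real.exp (-x)) (-Real.exp (-u)) u := by
      simpa using (hasDerivAt_neg u).exp
    have h2 : HasDerivAt (fun v : ℝ => k + v) 1 u := (hasDerivAt_id u).const_add k
    have h3 := h2.log (by positivity)
    have h5 := (expE_hasDerivAt (a := k + u) (by positivity)).comp u h2
    have h6 : HasDerivAt (fun x : ℝ => Real.exp (-(k + x))) (Real.exp (-(k + u)) * (-1)) u :=
      h2.neg.exp
    have hL := ((h3.sub_const (Real.log k)).add (h2.exp.mul h5)).sub_const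
      (Real.exp k * expE k)
    refine ((h1.mul hL).neg.add (((h2.mul h5).sub h6).const_mul (Real.exp k))).congr_deriv ?_
    have e : Real.exp (-(k + u)) = (Real.exp k)⁻¹ * (Real.exp u)⁻¹ := by
      rw [← Real.exp_neg, ← Real.exp_neg, ← Real.exp_add]; congr 1; ring
    simp only [Function.comp, hLe, Pi.mul_apply, Pi.add_apply]
    rw [e, Real.exp_add, Real.exp_neg]
    have := Real.exp_pos k
    have := Real.exp_pos u
    field_simp
    ring
  have hl : Tendsto (fun u : ℝ => -(Real.exp (-u) * Le u)
        + Real.exp k * ((k + u) * expE (k + u) - Real.exp (-(k + u)))) atTop (𝓝 0) := by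
    have ht := tendsto_atTop_add_const_left atTop k (tendsto_id (α := ℝ))
    have h1 : Tendsto (fun x : ℝ => x * Real.exp (-x)) atTop (𝓝 0) := by
      simpa using Real.tendsto_pow_mul_exp_neg_atTop_nhds_zero 1
    have hlog : Tendsto (fun v : ℝ => Real.exp (-v) * Real.log (k + v)) atTop (𝓝 0) := by
      have h : Tendsto (fun x : ℝ => Real.exp (-x) * (k + x)) atTop (𝓝 0) := by
        have := (exp_neg_tendsto.const_mul k).add h1
        simp only [mul_zero, add_zero] at this
        refine this.congr ?_
        intro x; ring
      refine squeeze_zero' ?_ ?_ h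
      · filter_upwards [eventually_ge_atTop 1] with x hx
        exact mul_nonneg (Real.exp_pos _).le (Real.log_nonneg (by linarith))
      · filter_upwards [eventually_ge_atTop 1] with x hx
        refine mul_le_mul_of_nonneg_left ?_ (Real.exp_pos _).le
        exact Real.log_le_self (by linarith)
    have h2 := (expE_tendsto.comp ht).const_mul (Real.exp k)
    have h3 := exp_neg_tendsto.const_mul (-Real.log k - Real.exp k * expE k)
    have h4 := ((mul_expE_tendsto.comp ht).sub (exp_neg_tendsto.comp ht)).const_mul (Real.exp k)
    have h5 := ((hlog.add h3).add h2).neg.add h4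
    simp only [mul_zero, add_zero, sub_zero, neg_zero] at h5
    refine h5.congr ?_
    intro u
    simp only [Function.comp, hLe, id]
    have e : Real.exp (-u) * Real.exp (k + u) = Real.exp k := by
      rw [← Real.exp_add]; congr 1; ring
    linear_combination (expE (k + u)) * e
  have hderInt := integrableOn_Ioi_deriv_of_nonneg' hd (fun x hx => by
    have hx : (0:ℝ) < x := hx
    refine mul_nonneg (Real.exp_pos _).le ?_
    have := Lfun_nonneg hk hx.le
    rwa [Lfun_eq hk hx.le] at this) hl
  rw [hcongr, integral_Ioi_of_hasDerivAt_of_tendsto' hd hderInt hl]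
  have e : Real.exp k * Real.exp (-k) = 1 := by rw [← Real.exp_add]; simp
  simp [hLe]
  linear_combination e
/-- substitution `t = exp (-v/N)` -/
lemma subst_exp {N : ℝ} (hN : 0 < N) (f : ℝ → ℝ) :
    ∫ t in (0:ℝ)..1, f t
      = ∫ v in Ioi (0:ℝ), (Real.exp (-(v / N)) / N) * f (Real.exp (-(v / N))) := by
  have himg : (fun v : ℝ => Real.exp (-(v / N))) '' Ioi 0 = Ioo 0 1 := by
    ext t
    constructor
    · rintro ⟨v, hv, rfl⟩
      have hv : (0:ℝ) < v := hv
      refine ⟨Real.exp_pos _, ?_⟩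
      have : 0 < v / N := by positivity
      simp only [Real.exp_lt_one_iff]
      linarith
    · rintro ⟨h0, h1⟩
      refine ⟨-(N * Real.log t), ?_, ?_⟩
      · have := Real.log_neg h0 h1
        have : 0 < N * (-Real.log t) := mul_pos hN (by linarith)
        show 0 < -(N * Real.log t)
        linarith
      · have : -(-(N * Real.log t) / N) = Real.log t := by field_simp
        simp only [this, Real.exp_log h0]
  have hd : ∀ v ∈ Ioi (0:ℝ), HasDerivWithinAt (fun v : ℝ => Real.exp (-(v / N)))
      (Real.exp (-(v / N)) * (-(1 / N))) (Ioi 0) v := by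
    intro v _
    exact (((hasDerivAt_id v).div_const N).neg.exp).hasDerivWithinAt
  have hinj : InjOn (fun v : ℝ => Real.exp (-(v / N))) (Ioi 0) := by
    intro a _ b _ h
    have := Real.exp_injective h
    field_simp at this
    linarith
  rw [intervalIntegral.integral_of_le zero_le_one, integral_Ioc_eq_integral_Ioo, ← himg,
    integral_image_eq_integral_abs_deriv_smul measurableSet_Ioi hd hinj]
  refine setIntegral_congr_fun measurableSet_Ioi ?_
  intro v _
  simp only [smul_eq_mul, abs_mul, abs_neg, abs_div, abs_one, abs_of_pos hN,
    abs_of_pos (Real.exp_pos _)]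
  ring

noncomputable def Wf (N e v : ℝ) : ℝ :=
  Real.exp (-v) * (Real.exp (-(e * v / N)) * (1 - Real.exp (-(v / N))) ^ (-e))

noncomputable def Hf (N e y : ℝ) : ℝ :=
  ∫ v in Ioi (0:ℝ), Wf N e v * (1 - y * Real.exp (-(v / N))) ^ e

lemma aCoef_props {t : ℝ} (ht : 2 ≤ t) : 0 < -aCoef t ∧ -aCoef t < 1 ∧ bCoef t = t + -aCoef t
    ∧ -aCoef t ≤ 2 / t ∧ 2 / t - 4 / t ^ 3 ≤ -aCoef t := by
  have h0 : 0 ≤ t ^ 2 + 8 := by positivity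
  have hs := Real.sq_sqrt h0
  have hs0 := Real.sqrt_nonneg (t ^ 2 + 8)
  set s := Real.sqrt (t ^ 2 + 8) with hsdef
  have h1 : t < s := by nlinarith
  have h2 : s < t + 2 := by nlinarith
  have hd : aCoef t = (t - s) / 2 := rfl
  have hb : bCoef t = (t + s) / 2 := rfl
  have h3 : s ≤ t + 4 / t := by
    have : 0 < 4 / t := by positivity
    have e : t * (4 / t) = 4 := by field_simp
    by_contra h
    push Not at h
    nlinarith
  refine ⟨by rw [hd]; linarith, by rw [hd]; linarith, by rw [hd, hb]; ring, ?_, ?_⟩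
  · rw [hd]
    have e : 2 / t = (4 / t) / 2 := by ring
    linarith
  · rw [hd]
    have h4 : (s - t) * (s + t) = 8 := by nlinarith
    have h5 : 8 ≤ (s - t) * (2 * t + 4 / t) := by
      rw [← h4]
      exact mul_le_mul_of_nonneg_left (by linarith) (by linarith)
    have h6 : (s - t) ≤ 4 / t := by linarith
    have e : (s - t) * (2 * t + 4 / t) = 2 * t * (s - t) + (s - t) * (4 / t) := by ring
    have h7 : (s - t) * (4 / t) ≤ (4 / t) * (4 / t) :=
      mul_le_mul_of_nonneg_right h6 (by positivity)
    have h8 : 8 - (4 / t) * (4 / t) ≤ 2 * t * (s - t) := by linarith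
    have e2 : 2 / t - 4 / t ^ 3 = (8 - (4 / t) * (4 / t)) / (4 * t) := by
      field_simp; ring
    rw [e2, div_le_iff₀ (by positivity)]
    linarith

lemma Fhyp_eq {N : ℝ} (hN : 2 ≤ N) :
    ∃ C : ℝ, 0 < C ∧ ∀ y, Fhyp N y = C * Hf N (-aCoef N) y := by
  obtain ⟨h0, h1, hb, -, -⟩ := aCoef_props hN
  set e := -aCoef N with he
  have hN0 : 0 < N := by linarith
  refine ⟨Real.Gamma (N + 1) / (Real.Gamma (bCoef N) * Real.Gamma (N + 1 - bCoef N)) / N,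
    ?_, ?_⟩
  · rw [hb]
    have a1 := Real.Gamma_pos_of_pos (show 0 < N + 1 by linarith)
    have a2 := Real.Gamma_pos_of_pos (show 0 < N + e by linarith)
    have a3 := Real.Gamma_pos_of_pos (show 0 < N + 1 - (N + e) by linarith)
    positivity
  · intro y
    rw [Fhyp, hyper, if_pos ⟨by rw [hb]; linarith, by rw [hb]; linarith⟩, subst_exp hN0]
    suffices h : ∫ v in Ioi (0:ℝ), Real.exp (-(v / N)) / N * (Real.exp (-(v / N)) ^ (bCoef N - 1) *
        (1 - Real.exp (-(v / N))) ^ (N + 1 - bCoef N - 1) *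
        (1 - y * Real.exp (-(v / N))) ^ (-aCoef N)) = Hf N e y / N by
      rw [h]; ring
    rw [Hf, ← integral_div]
    refine setIntegral_congr_fun measurableSet_Ioi ?_
    intro v _
    have e1 : N + 1 - bCoef N - 1 = -e := by rw [hb]; ring
    simp only [e1, ← he, Wf, ← Real.exp_mul]
    have e2 : Real.exp (-v) * Real.exp (-(e * v / N))
        = Real.exp (-(v / N)) * Real.exp (-(v / N) * (bCoef N - 1)) := by
      rw [← Real.exp_add, ← Real.exp_add, hb]; congr 1; field_simp; ring
    rw [← mul_assoc (Real.exp (-v)), e2]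
    ring
noncomputable def Bd (v : ℝ) : ℝ := 2 * (Real.exp (-v) + Real.exp (-v) * v ^ ((1/2 : ℝ) - 1))

lemma Bd_integrable : IntegrableOn Bd (Ioi 0) :=
  ((integrableOn_exp_neg_Ioi 0).add
    (Real.GammaIntegral_convergent (s := 1/2) (by norm_num))).const_mul 2

lemma Bd_nonneg {v : ℝ} (hv : 0 < v) : 0 ≤ Bd v := by
  unfold Bd; positivity

structure Good (N e : ℝ) : Prop where
  hN : 2 ≤ N
  he0 : 0 < e
  he1 : e ≤ 1 / 2
  hNe : N ^ e ≤ 2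

lemma one_sub_exp_pos {N v : ℝ} (hN : 0 < N) (hv : 0 < v) : 0 < 1 - Real.exp (-(v / N)) := by
  have : 0 < v / N := by positivity
  have : Real.exp (-(v / N)) < 1 := by rw [Real.exp_lt_one_iff]; linarith
  linarith

lemma Wf_nonneg {N e v : ℝ} (hN : 0 < N) (hv : 0 < v) : 0 ≤ Wf N e v := by
  have := one_sub_exp_pos hN hv
  unfold Wf; positivity

lemma Wf_le {N e v : ℝ} (h : Good N e) (hv : 0 < v) : Wf N e v ≤ Bd v := by
  obtain ⟨hN, he0, he1, hNe⟩ := h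
  have hN0 : 0 < N := by linarith
  set z := v / N with hz
  have hz0 : 0 < z := by positivity
  have h1 : z * Real.exp (-z) ≤ 1 - Real.exp (-z) := by
    have h2 := Real.add_one_le_exp z
    have h3 : Real.exp z * Real.exp (-z) = 1 := by rw [← Real.exp_add]; simp
    nlinarith [Real.exp_pos (-z)]
  have h2 : (1 - Real.exp (-z)) ^ (-e) ≤ (z * Real.exp (-z)) ^ (-e) :=
    Real.rpow_le_rpow_of_nonpos (by positivity) h1 (by linarith)
  have h3 : (z * Real.exp (-z)) ^ (-e) = z ^ (-e) * Real.exp (e * z) := by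
    rw [Real.mul_rpow hz0.le (Real.exp_pos _).le, ← Real.exp_mul]; congr 2; ring
  have h4 : z ^ (-e) = N ^ e * v ^ (-e) := by
    rw [hz, Real.div_rpow hv.le hN0.le, Real.rpow_neg hN0.le]; field_simp
  have h5 : v ^ (-e) ≤ 1 + v ^ ((1/2 : ℝ) - 1) := by
    rcases le_total 1 v with h | h
    · have a1 : v ^ (-e) ≤ 1 := Real.rpow_le_one_of_one_le_of_nonpos h (by linarith)
      have a2 : 0 ≤ v ^ ((1/2 : ℝ) - 1) := by positivity
      linarith
    · have a1 : v ^ (-e) ≤ v ^ ((1/2 : ℝ) - 1) :=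
        Real.rpow_le_rpow_of_exponent_ge hv h (by linarith)
      linarith
  have h6 : Real.exp (-(e * v / N)) * (1 - Real.exp (-z)) ^ (-e) ≤ N ^ e * v ^ (-e) := by
    calc Real.exp (-(e * v / N)) * (1 - Real.exp (-z)) ^ (-e)
        ≤ Real.exp (-(e * v / N)) * (z ^ (-e) * Real.exp (e * z)) := by
          rw [← h3]; exact mul_le_mul_of_nonneg_left h2 (Real.exp_pos _).le
      _ = z ^ (-e) * (Real.exp (-(e * v / N)) * Real.exp (e * z)) := by ring
      _ = z ^ (-e) := by
          rw [← Real.exp_add]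
          have : -(e * v / N) + e * z = 0 := by rw [hz]; ring
          rw [this]; simp
      _ = N ^ e * v ^ (-e) := h4
  have h7 : N ^ e * v ^ (-e) ≤ 2 * (1 + v ^ ((1/2 : ℝ) - 1)) :=
    mul_le_mul hNe h5 (by positivity) (by norm_num)
  calc Wf N e v ≤ Real.exp (-v) * (2 * (1 + v ^ ((1/2 : ℝ) - 1))) :=
        mul_le_mul_of_nonneg_left (h6.trans h7) (Real.exp_pos _).le
    _ = Bd v := by unfold Bd; ring

lemma base_bounds {N y v : ℝ} (hN : 0 < N) (hy0 : 0 ≤ y) (hy1 : y ≤ 1) (hv : 0 < v) :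
    1 - Real.exp (-(v / N)) ≤ 1 - y * Real.exp (-(v / N)) ∧ 1 - y * Real.exp (-(v / N)) ≤ 1 := by
  have := Real.exp_pos (-(v / N))
  constructor <;> nlinarith

lemma q_bounds {N e y v : ℝ} (hN : 0 < N) (he : 0 < e) (hy0 : 0 ≤ y) (hy1 : y ≤ 1) (hv : 0 < v) :
    (1 - Real.exp (-(v / N))) ^ e ≤ (1 - y * Real.exp (-(v / N))) ^ e ∧
      (1 - y * Real.exp (-(v / N))) ^ e ≤ 1 := by
  have h := base_bounds hN hy0 hy1 hv
  have h0 := one_sub_exp_pos hN hv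
  exact ⟨Real.rpow_le_rpow h0.le h.1 he.le, Real.rpow_le_one (by linarith) h.2 he.le⟩

lemma Wf_meas (N e : ℝ) : Measurable (Wf N e) := by
  unfold Wf; fun_prop

lemma q_meas (N e y : ℝ) : Measurable (fun v : ℝ => (1 - y * Real.exp (-(v / N))) ^ e) := by
  fun_prop

lemma H_integrable {N e y : ℝ} (h : Good N e) (hy0 : 0 ≤ y) (hy1 : y ≤ 1) :
    IntegrableOn (fun v => Wf N e v * (1 - y * Real.exp (-(v / N))) ^ e) (Ioi 0) := by
  have hN0 : 0 < N := by linarith [h.hN]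
  refine Integrable.mono' Bd_integrable ((Wf_meas N e).mul (q_meas N e y)).aestronglyMeasurable ?_
  refine (ae_restrict_mem measurableSet_Ioi).mono ?_
  intro v hv
  have hv : 0 < v := hv
  have hq := q_bounds hN0 h.he0 hy0 hy1 hv
  have h0 := one_sub_exp_pos hN0 hv
  have hq0 : 0 ≤ (1 - y * Real.exp (-(v / N))) ^ e := le_trans (by positivity) hq.1
  have hW := Wf_nonneg (e := e) hN0 hv
  rw [Real.norm_of_nonneg (mul_nonneg hW hq0)]
  calc _ ≤ Wf N e v * 1 := mul_le_mul_of_nonneg_left hq.2 hW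
    _ ≤ Bd v := by rw [mul_one]; exact Wf_le h hv

lemma rpow_diff {p q e : ℝ} (hp : 0 < p) (hpq : p ≤ q) (hp1 : p ≤ 1) (he0 : 0 ≤ e) (he1 : e ≤ 1) :
    0 ≤ q ^ e - p ^ e ∧ q ^ e - p ^ e ≤ e * ((q - p) / p) := by
  constructor
  · have := Real.rpow_le_rpow hp.le hpq he0
    linarith
  · have h0 : 0 ≤ (q - p) / p := div_nonneg (by linarith) hp.le
    have h1 : q = p * (1 + (q - p) / p) := by field_simp; ring
    have h2 : q ^ e = p ^ e * (1 + (q - p) / p) ^ e := by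
      conv_lhs => rw [h1]
      rw [Real.mul_rpow hp.le (by linarith)]
    have h3 := rpow_one_add_le_one_add_mul_self (s := (q - p) / p) (by linarith) he0 he1
    have h4 : p ^ e ≤ 1 := Real.rpow_le_one hp.le hp1 he0
    have h5 : 0 ≤ p ^ e := by positivity
    have h6 : 0 ≤ e * ((q - p) / p) := mul_nonneg he0 h0
    rw [h2]
    nlinarith [mul_le_mul_of_nonneg_left h3 h5, mul_le_mul_of_nonneg_right h4 h6]

lemma term_diff {N e y y' v : ℝ} (h : Good N e) (hy'0 : 0 ≤ y') (hyy : y' ≤ y) (hy1 : y < 1)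
    (hv : 0 < v) :
    0 ≤ (1 - y' * Real.exp (-(v / N))) ^ e - (1 - y * Real.exp (-(v / N))) ^ e ∧
    (1 - y' * Real.exp (-(v / N))) ^ e - (1 - y * Real.exp (-(v / N))) ^ e
      ≤ e * ((y - y') / (1 - y)) := by
  have hN0 : 0 < N := by linarith [h.hN]
  have ht0 := Real.exp_pos (-(v / N))
  have ht1 := one_sub_exp_pos hN0 hv
  set t := Real.exp (-(v / N))
  have hp : 1 - y ≤ 1 - y * t := by nlinarith
  have hp1 : 1 - y * t ≤ 1 := by nlinarith
  have hpq : 1 - y * t ≤ 1 - y' * t := by nlinarith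
  have hd := rpow_diff (by linarith : 0 < 1 - y * t) hpq hp1 h.he0.le (by linarith [h.he1])
  refine ⟨hd.1, hd.2.trans ?_⟩
  refine mul_le_mul_of_nonneg_left ?_ h.he0.le
  refine div_le_div₀ (by linarith) ?_ (by linarith) hp
  nlinarith

lemma H_anti {N e y y' : ℝ} (h : Good N e) (hy'0 : 0 ≤ y') (hyy : y' ≤ y) (hy1 : y ≤ 1) :
    Hf N e y ≤ Hf N e y' := by
  have hN0 : 0 < N := by linarith [h.hN]
  refine setIntegral_mono_on (H_integrable h (by linarith) hy1)
    (H_integrable h hy'0 (by linarith)) measurableSet_Ioi ?_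
  intro v hv
  have hv : 0 < v := hv
  refine mul_le_mul_of_nonneg_left ?_ (Wf_nonneg hN0 hv)
  have ht0 := Real.exp_pos (-(v / N))
  have ht1 := one_sub_exp_pos hN0 hv
  refine Real.rpow_le_rpow ?_ ?_ h.he0.le <;> nlinarith

lemma H_diff {N e y y' : ℝ} (h : Good N e) (hy'0 : 0 ≤ y') (hyy : y' ≤ y) (hy1 : y < 1) :
    Hf N e y' - Hf N e y ≤ e * ((y - y') / (1 - y)) * ∫ v in Ioi (0:ℝ), Bd v := by
  have hN0 : 0 < N := by linarith [h.hN]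
  have i1 := H_integrable h hy'0 (by linarith)
  have i2 := H_integrable h (by linarith : 0 ≤ y) hy1.le
  rw [Hf, Hf, ← integral_sub i1 i2, ← integral_const_mul]
  refine setIntegral_mono_on (i1.sub i2) (Bd_integrable.const_mul _) measurableSet_Ioi ?_
  intro v hv
  have hv : 0 < v := hv
  have hd := term_diff h hy'0 hyy hy1 hv
  have hW := Wf_nonneg (e := e) hN0 hv
  have hW' := Wf_le h hv
  rw [← mul_sub, mul_comm]
  exact mul_le_mul hd.2 hW' hW (hd.1.trans hd.2)
lemma tendsto_zero_of_scaled {z : ℕ → ℝ} {m : ℝ}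
    (h : Tendsto (fun n : ℕ => (n : ℝ) * z n) atTop (𝓝 m)) : Tendsto z atTop (𝓝 0) := by
  have h1 : Tendsto (fun n : ℕ => ((n : ℝ))⁻¹) atTop (𝓝 0) :=
    tendsto_inv_atTop_zero.comp tendsto_natCast_atTop_atTop
  have h2 := h1.mul h
  rw [zero_mul] at h2
  refine h2.congr' ?_
  filter_upwards [eventually_gt_atTop 0] with n hn
  have : (0:ℝ) < n := by exact_mod_cast hn
  field_simp

lemma scaled_expm1 {z : ℕ → ℝ} {m : ℝ}
    (h : Tendsto (fun n : ℕ => (n : ℝ) * z n) atTop (𝓝 m)) :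
    Tendsto (fun n : ℕ => (n : ℝ) * (Real.exp (z n) - 1)) atTop (𝓝 m) := by
  have hz := tendsto_zero_of_scaled h
  have hc : ContinuousAt (dslope Real.exp 0) 0 := by
    rw [continuousAt_dslope_same]; exact Real.differentiableAt_exp
  have h1 : Tendsto (fun n => dslope Real.exp 0 (z n)) atTop (𝓝 1) := by
    have := hc.tendsto.comp hz
    simpa [dslope_same, Function.comp_def] using this
  have h2 := h.mul h1
  rw [mul_one] at h2
  refine h2.congr ?_
  intro n
  have := sub_smul_dslope Real.exp 0 (z n)
  simp only [sub_zero, smul_eq_mul, Real.exp_zero] at this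
  rw [mul_assoc, this]

lemma scaled_exp (v : ℝ) :
    Tendsto (fun n : ℕ => (n : ℝ) * (1 - Real.exp (-(v / n)))) atTop (𝓝 v) := by
  have h : Tendsto (fun n : ℕ => (n : ℝ) * (-(v / n))) atTop (𝓝 (-v)) := by
    refine tendsto_const_nhds.congr' ?_
    filter_upwards [eventually_gt_atTop 0] with n hn
    have : (0:ℝ) < n := by exact_mod_cast hn
    field_simp
  have := (scaled_expm1 h).neg
  rw [neg_neg] at this
  refine this.congr ?_
  intro n; ring

lemma scaled_mul {x y : ℕ → ℝ} {s v : ℝ}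
    (hx : Tendsto (fun n : ℕ => (n : ℝ) * (1 - x n)) atTop (𝓝 s))
    (hy : Tendsto (fun n : ℕ => (n : ℝ) * (1 - y n)) atTop (𝓝 v)) :
    Tendsto (fun n : ℕ => (n : ℝ) * (1 - x n * y n)) atTop (𝓝 (s + v)) := by
  have h1 := (tendsto_zero_of_scaled hx).const_sub 1
  have h2 := hx.add (h1.mul hy)
  have e : s + (1 - 0) * v = s + v := by ring
  rw [e] at h2
  refine h2.congr ?_
  intro n; ring

lemma exp_div_tendsto (v : ℝ) : Tendsto (fun n : ℕ => Real.exp (-(v / n))) atTop (𝓝 1) := by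
  have := (tendsto_zero_of_scaled (scaled_exp v)).const_sub 1
  simpa using this

section
variable {e : ℕ → ℝ}

lemma e_log_tendsto (he : Tendsto (fun n : ℕ => (n : ℝ) * e n) atTop (𝓝 2)) :
    Tendsto (fun n : ℕ => e n * Real.log n) atTop (𝓝 0) := by
  have h0 : Tendsto (fun x : ℝ => Real.log x / x) atTop (𝓝 0) :=
    Real.isLittleO_log_id_atTop.tendsto_div_nhds_zero
  have h1 := he.mul (h0.comp tendsto_natCast_atTop_atTop)
  rw [mul_zero] at h1
  refine h1.congr' ?_
  filter_upwards [eventually_gt_atTop 0] with n hn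
  have : (0:ℝ) < n := by exact_mod_cast hn
  simp only [Function.comp]
  field_simp

lemma pow_tendsto_one (he : Tendsto (fun n : ℕ => (n : ℝ) * e n) atTop (𝓝 2))
    {p : ℕ → ℝ} {l : ℝ} (hl : 0 < l)
    (hp : Tendsto (fun n : ℕ => (n : ℝ) * p n) atTop (𝓝 l)) :
    Tendsto (fun n : ℕ => (p n) ^ (e n)) atTop (𝓝 1) := by
  have h1 := (tendsto_zero_of_scaled he).mul (hp.log hl.ne')
  have h2 := h1.sub (e_log_tendsto he)
  rw [zero_mul, sub_zero] at h2
  have h3 := (Real.continuous_exp.tendsto 0).comp h2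
  rw [Real.exp_zero] at h3
  refine h3.congr' ?_
  filter_upwards [eventually_gt_atTop 0, hp.eventually (lt_mem_nhds hl)] with n hn hpn
  have hn' : (0:ℝ) < n := by exact_mod_cast hn
  have hp0 : 0 < p n := by
    by_contra h
    push Not at h
    nlinarith
  simp only [Function.comp]
  rw [Real.log_mul hn'.ne' hp0.ne', Real.rpow_def_of_pos hp0]
  congr 1; ring

lemma npow_tendsto (he : Tendsto (fun n : ℕ => (n : ℝ) * e n) atTop (𝓝 2)) :
    Tendsto (fun n : ℕ => (n : ℝ) ^ (e n)) atTop (𝓝 1) := by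
  have h3 := (Real.continuous_exp.tendsto 0).comp (e_log_tendsto he)
  rw [Real.exp_zero] at h3
  refine h3.congr' ?_
  filter_upwards [eventually_gt_atTop 0] with n hn
  have hn' : (0:ℝ) < n := by exact_mod_cast hn
  simp only [Function.comp]
  rw [Real.rpow_def_of_pos hn']
  congr 1; ring

lemma good_eventually (he : Tendsto (fun n : ℕ => (n : ℝ) * e n) atTop (𝓝 2)) :
    ∀ᶠ n : ℕ in atTop, Good n (e n) := by
  filter_upwards [eventually_ge_atTop 2,
    he.eventually (lt_mem_nhds (show (0:ℝ) < 2 by norm_num)),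
    (tendsto_zero_of_scaled he).eventually (gt_mem_nhds (show (0:ℝ) < 1/2 by norm_num)),
    (npow_tendsto he).eventually (gt_mem_nhds (show (1:ℝ) < 2 by norm_num))] with n h1 h2 h3 h4
  refine ⟨by exact_mod_cast h1, ?_, h3.le, h4.le⟩
  have hn' : (0:ℝ) ≤ n := by positivity
  by_contra h
  push Not at h
  nlinarith

lemma W_tendsto (he : Tendsto (fun n : ℕ => (n : ℝ) * e n) atTop (𝓝 2)) {v : ℝ} (hv : 0 < v) :
    Tendsto (fun n : ℕ => Wf n (e n) v) atTop (𝓝 (Real.exp (-v))) := by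
  have h1 := (pow_tendsto_one he hv (scaled_exp v)).inv₀ one_ne_zero
  have h2 : Tendsto (fun n : ℕ => Real.exp (-(e n * v / n))) atTop (𝓝 1) := by
    have h0 : Tendsto (fun n : ℕ => ((n : ℝ))⁻¹) atTop (𝓝 0) :=
      tendsto_inv_atTop_zero.comp tendsto_natCast_atTop_atTop
    have h3 := (((tendsto_zero_of_scaled he).mul_const v).mul h0).neg
    simp only [mul_zero, neg_zero] at h3
    have h4 := (Real.continuous_exp.tendsto 0).comp h3
    rw [Real.exp_zero] at h4
    exact h4
  have h3 := (h2.mul h1).const_mul (Real.exp (-v))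
  simp only [inv_one, mul_one] at h3
  refine h3.congr' ?_
  filter_upwards [eventually_gt_atTop 0] with n hn
  have hn' : (0:ℝ) < n := by exact_mod_cast hn
  rw [Wf, Real.rpow_neg (one_sub_exp_pos hn' hv).le]

lemma H_tendsto (he : Tendsto (fun n : ℕ => (n : ℝ) * e n) atTop (𝓝 2)) {y : ℕ → ℝ}
    (hy : ∀ᶠ n in atTop, 0 ≤ y n ∧ y n ≤ 1) :
    Tendsto (fun n : ℕ => Hf n (e n) (y n)) atTop (𝓝 1) := by
  have hI : ∫ v in Ioi (0:ℝ), Real.exp (-v) = 1 := integral_exp_neg_Ioi_zero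
  rw [← hI]
  refine tendsto_integral_filter_of_dominated_convergence Bd ?_ ?_ Bd_integrable ?_
  · filter_upwards with n
    exact ((Wf_meas n (e n)).mul (q_meas n (e n) (y n))).aestronglyMeasurable
  · filter_upwards [good_eventually he, hy] with n h hyn
    refine (ae_restrict_mem measurableSet_Ioi).mono ?_
    intro v hv
    have hv : 0 < v := hv
    have hN0 : (0:ℝ) < n := by linarith [h.hN]
    have hq := q_bounds hN0 h.he0 hyn.1 hyn.2 hv
    have h0 := one_sub_exp_pos hN0 hv
    have hq0 : 0 ≤ (1 - y n * Real.exp (-(v / n))) ^ e n := le_trans (by positivity) hq.1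
    have hW := Wf_nonneg (e := e n) hN0 hv
    rw [Real.norm_of_nonneg (mul_nonneg hW hq0)]
    calc _ ≤ Wf n (e n) v * 1 := mul_le_mul_of_nonneg_left hq.2 hW
      _ ≤ Bd v := by rw [mul_one]; exact Wf_le h hv
  · refine (ae_restrict_mem measurableSet_Ioi).mono ?_
    intro v hv
    have hv : 0 < v := hv
    have h1 : Tendsto (fun n : ℕ => (1 - y n * Real.exp (-(v / n))) ^ e n) atTop (𝓝 1) := by
      refine tendsto_of_tendsto_of_tendsto_of_le_of_le' (pow_tendsto_one he hv (scaled_exp v))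
        tendsto_const_nhds ?_ ?_
      · filter_upwards [good_eventually he, hy] with n h hyn
        exact (q_bounds (by linarith [h.hN]) h.he0 hyn.1 hyn.2 hv).1
      · filter_upwards [good_eventually he, hy] with n h hyn
        exact (q_bounds (by linarith [h.hN]) h.he0 hyn.1 hyn.2 hv).2
    simpa using (W_tendsto he hv).mul h1

lemma diff_bound (he : Tendsto (fun n : ℕ => (n : ℝ) * e n) atTop (𝓝 2)) {x : ℕ → ℝ} {k : ℝ}
    (hk : 0 < k) (hx : ∀ᶠ n in atTop, 0 < x n ∧ x n < 1)
    (hxk : Tendsto (fun n : ℕ => (n : ℝ) * (1 - x n)) atTop (𝓝 k)) :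
    ∀ᶠ n : ℕ in atTop, ∀ u, 0 ≤ u →
      (n : ℝ) * (e n * ((x n - Real.exp (-(u / n)) * x n) / (1 - x n))) ≤ 6 / k * u := by
  filter_upwards [good_eventually he, hx,
    he.eventually (gt_mem_nhds (show (2:ℝ) < 3 by norm_num)),
    hxk.eventually (lt_mem_nhds (show k / 2 < k by linarith))] with n h hxn h3 h4 u hu
  have hN0 : (0:ℝ) < n := by linarith [h.hN]
  have h1x : 0 < 1 - x n := by linarith
  have h5 : 1 - Real.exp (-(u / n)) ≤ u / n := by
    have := Real.add_one_le_exp (-(u / n)); linarith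
  have h6 : x n - Real.exp (-(u / n)) * x n ≤ u / n := by
    have : 0 ≤ u / n := by positivity
    nlinarith [hxn.1, hxn.2]
  calc (n : ℝ) * (e n * ((x n - Real.exp (-(u / n)) * x n) / (1 - x n)))
      ≤ (n : ℝ) * (e n * ((u / n) / (1 - x n))) := by
        have := h.he0
        gcongr
    _ = (n * e n) * u / (n * (1 - x n)) := by field_simp
    _ ≤ 3 * u / (k / 2) := by
        have := h.he0
        gcongr
    _ = 6 / k * u := by field_simp; ring

lemma inner_tendsto (he : Tendsto (fun n : ℕ => (n : ℝ) * e n) atTop (𝓝 2)) {x : ℕ → ℝ} {k : ℝ}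
    (hk : 0 < k) (hx : ∀ᶠ n in atTop, 0 < x n ∧ x n < 1)
    (hxk : Tendsto (fun n : ℕ => (n : ℝ) * (1 - x n)) atTop (𝓝 k)) {u : ℝ} (hu : 0 < u) :
    Tendsto (fun n : ℕ => (n : ℝ) * (Hf n (e n) (Real.exp (-(u / n)) * x n) - Hf n (e n) (x n)))
      atTop (𝓝 (2 * Lfun k u)) := by
  have key : Tendsto (fun n : ℕ => ∫ v in Ioi (0:ℝ), (n : ℝ) * (Wf n (e n) v *
      ((1 - (Real.exp (-(u / n)) * x n) * Real.exp (-(v / n))) ^ (e n)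
        - (1 - x n * Real.exp (-(v / n))) ^ (e n)))) atTop
      (𝓝 (∫ v in Ioi (0:ℝ), 2 * (Real.exp (-v) * Real.log ((k + u + v) / (k + v))))) := by
    refine tendsto_integral_filter_of_dominated_convergence (fun v => 6 / k * u * Bd v) ?_ ?_
      (Bd_integrable.const_mul _) ?_
    · filter_upwards with n
      exact (((Wf_meas n (e n)).mul ((q_meas n (e n) _).sub (q_meas n (e n) _))).const_mul
        _).aestronglyMeasurable
    · filter_upwards [good_eventually he, hx, diff_bound he hk hx hxk] with n h hxn hdb
      refine (ae_restrict_mem measurableSet_Ioi).mono ?_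
      intro v hv
      have hv : 0 < v := hv
      have hN0 : (0:ℝ) < n := by linarith [h.hN]
      have ht0 := Real.exp_pos (-(u / n))
      have ht1 := one_sub_exp_pos hN0 hu
      have hd := term_diff h (y := x n) (y' := Real.exp (-(u / n)) * x n)
        (mul_nonneg ht0.le hxn.1.le) (by nlinarith [hxn.1]) hxn.2 hv
      have hW := Wf_nonneg (e := e n) hN0 hv
      have hW' := Wf_le h hv
      have hb := hdb u hu.le
      rw [Real.norm_of_nonneg (mul_nonneg hN0.le (mul_nonneg hW hd.1))]
      rw [mul_left_comm, mul_comm (6 / k * u)]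
      refine mul_le_mul hW' ((mul_le_mul_of_nonneg_left hd.2 hN0.le).trans hb)
        (mul_nonneg hN0.le hd.1) (hW.trans hW')
    · refine (ae_restrict_mem measurableSet_Ioi).mono ?_
      intro v hv
      have hv : 0 < v := hv
      have hq := scaled_mul (scaled_mul (scaled_exp u) hxk) (scaled_exp v)
      have hp := scaled_mul hxk (scaled_exp v)
      have hkv : 0 < k + v := by positivity
      have hukv : 0 < u + k + v := by positivity
      have hpe := pow_tendsto_one he hkv hp
      have hlog : Tendsto (fun n : ℕ => (n : ℝ) * (e n *
          Real.log ((1 - (Real.exp (-(u / n)) * x n) * Real.exp (-(v / n)))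
            / (1 - x n * Real.exp (-(v / n)))))) atTop
          (𝓝 (2 * Real.log ((k + u + v) / (k + v)))) := by
        have h1 := (hq.div hp hkv.ne').log (div_pos hukv hkv).ne'
        have h2 := he.mul h1
        rw [show u + k + v = k + u + v by ring] at h2
        refine h2.congr' ?_
        filter_upwards [eventually_gt_atTop 0] with n hn
        have hn' : (0:ℝ) < n := by exact_mod_cast hn
        simp only [Pi.div_apply]
        rw [mul_div_mul_left _ _ hn'.ne', mul_assoc]
      have h5 := (W_tendsto he hv).mul (hpe.mul (scaled_expm1 hlog))
      rw [show Real.exp (-v) * (1 * (2 * Real.log ((k + u + v) / (k + v))))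
        = 2 * (Real.exp (-v) * Real.log ((k + u + v) / (k + v))) by ring] at h5
      refine h5.congr' ?_
      filter_upwards [eventually_gt_atTop 0, hq.eventually (lt_mem_nhds hukv),
        hp.eventually (lt_mem_nhds hkv)] with n hn hqn hpn
      have hn' : (0:ℝ) < n := by exact_mod_cast hn
      have hq0 : 0 < 1 - (Real.exp (-(u / n)) * x n) * Real.exp (-(v / n)) :=
        pos_of_mul_pos_right hqn hn'.le
      have hp0 : 0 < 1 - x n * Real.exp (-(v / n)) := pos_of_mul_pos_right hpn hn'.le
      set q := 1 - (Real.exp (-(u / n)) * x n) * Real.exp (-(v / n))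
      set p := 1 - x n * Real.exp (-(v / n))
      have e1 : Real.exp (e n * Real.log (q / p)) = q ^ e n / p ^ e n := by
        rw [← Real.div_rpow hq0.le hp0.le, Real.rpow_def_of_pos (div_pos hq0 hp0), mul_comm]
      rw [e1]
      have : 0 < p ^ e n := by positivity
      field_simp
  rw [integral_const_mul] at key
  refine key.congr' ?_
  filter_upwards [good_eventually he, hx] with n h hxn
  have hN0 : (0:ℝ) < n := by linarith [h.hN]
  have ht0 := Real.exp_pos (-(u / n))
  have ht1 := one_sub_exp_pos hN0 hu
  have i1 := H_integrable h (y := Real.exp (-(u / n)) * x n) (mul_nonneg ht0.le hxn.1.le)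
    (by nlinarith [hxn.1, hxn.2])
  have i2 := H_integrable h hxn.1.le hxn.2.le
  rw [Hf, Hf, ← integral_sub i1 i2, ← integral_const_mul]
  refine setIntegral_congr_fun measurableSet_Ioi ?_
  intro v _
  simp only []
  ring

end
noncomputable def Df (n : ℕ) (e x : ℝ) : ℝ :=
  ∫ τ in (0:ℝ)..1, (Hf n e (τ * x) - Hf n e x) * (τ ^ n * (-1 + 2 * x * τ))

lemma H_intervalIntegrable {n : ℕ} {e x : ℝ} (h : Good n e) (hx0 : 0 < x) (hx1 : x < 1) :
    IntervalIntegrable (fun τ => Hf n e (τ * x)) volume 0 1 := by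
  refine AntitoneOn.intervalIntegrable ?_
  rw [uIcc_of_le zero_le_one]
  intro a ha b hb hab
  exact H_anti h (mul_nonneg ha.1 hx0.le) (mul_le_mul_of_nonneg_right hab hx0.le)
    (by nlinarith [hb.1, hb.2])

lemma poly_integral (n : ℕ) (x : ℝ) :
    ∫ τ in (0:ℝ)..1, τ ^ n * (-1 + 2 * x * τ) = -(1 / ((n:ℝ) + 1)) + 2 * x * (1 / ((n:ℝ) + 2)) := by
  have e1 : ∀ τ : ℝ, τ ^ n * (-1 + 2 * x * τ) = (-1) * τ ^ n + 2 * x * τ ^ (n + 1) := by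
    intro τ; ring
  simp_rw [e1]
  rw [intervalIntegral.integral_add, intervalIntegral.integral_const_mul,
    intervalIntegral.integral_const_mul, integral_pow, integral_pow]
  · push_cast
    rw [one_pow, one_pow, zero_pow (by omega), zero_pow (by omega),
      show (n:ℝ) + 1 + 1 = n + 2 by ring]
    ring
  · exact (by fun_prop : Continuous fun τ : ℝ => (-1) * τ ^ n).intervalIntegrable _ _
  · exact (by fun_prop : Continuous fun τ : ℝ => 2 * x * τ ^ (n + 1)).intervalIntegrable _ _

lemma Df_split {n : ℕ} {e x : ℝ} (h : Good n e) (hx0 : 0 < x) (hx1 : x < 1) :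
    ∫ τ in (0:ℝ)..1, Hf n e (τ * x) * (τ ^ n * (-1 + 2 * x * τ))
      = Df n e x + Hf n e x * (-(1 / ((n:ℝ) + 1)) + 2 * x * (1 / ((n:ℝ) + 2))) := by
  have hc : Continuous fun τ : ℝ => τ ^ n * (-1 + 2 * x * τ) := by fun_prop
  have i1 := (H_intervalIntegrable h hx0 hx1).mul_continuousOn hc.continuousOn
  have i2 : IntervalIntegrable (fun τ : ℝ => Hf n e x * (τ ^ n * (-1 + 2 * x * τ))) volume 0 1 :=
    (hc.const_mul _).intervalIntegrable _ _
  rw [← poly_integral, ← intervalIntegral.integral_const_mul, Df]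
  simp_rw [sub_mul]
  rw [intervalIntegral.integral_sub i1 i2]
  ring

lemma zeta_eq {A B : ℝ} {n : ℕ} {x : ℝ} (hA : 0 < A) (h : Good n (-aCoef n))
    (hx0 : 0 < x) (hx1 : x < 1) (hz : zetaDisp A B n x = 0) :
    Hf n (-aCoef n) x * (1 - x - (kap A B + 1) * (1 / ((n:ℝ) + 1)) * x
      - 1 / ((n:ℝ) + 1) + 2 * x * (1 / ((n:ℝ) + 2))) + Df n (-aCoef n) x = 0 := by
  obtain ⟨C, hC, hF⟩ := Fhyp_eq h.hN
  rw [zetaDisp] at hz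
  simp_rw [hF] at hz
  have e1 : ∀ τ : ℝ, C * Hf n (-aCoef n) (τ * x) * τ ^ n * (-1 + 2 * x * τ)
      = C * (Hf n (-aCoef n) (τ * x) * (τ ^ n * (-1 + 2 * x * τ))) := by intro τ; ring
  simp_rw [e1] at hz
  rw [intervalIntegral.integral_const_mul, Df_split h hx0 hx1] at hz
  have e2 : (A + 2 * B) / (A * ((n:ℝ) + 1)) = -((kap A B + 1) * (1 / ((n:ℝ) + 1))) := by
    rw [kap]; field_simp; ring
  rw [e2] at hz
  refine (mul_eq_zero.mp (?_ : C * _ = 0)).resolve_left hC.ne'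
  rw [← hz]
  ring

section
variable {e : ℕ → ℝ}

lemma Df_coarse (he : Tendsto (fun n : ℕ => (n : ℝ) * e n) atTop (𝓝 2)) {x : ℕ → ℝ}
    (hx : ∀ᶠ n in atTop, 0 < x n ∧ x n < 1) :
    Tendsto (fun n : ℕ => (n : ℝ) * Df n (e n) (x n)) atTop (𝓝 0) := by
  have h0 := H_tendsto he (y := fun _ => 0) (by simp)
  have h1 := H_tendsto he (y := fun _ => 1) (by simp)
  have h2 := h0.sub h1
  rw [sub_self] at h2
  refine squeeze_zero_norm' ?_ h2
  filter_upwards [good_eventually he, hx] with n h hxn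
  have hN0 : (0:ℝ) < n := by linarith [h.hN]
  have hb : ‖Df n (e n) (x n)‖ ≤ ∫ τ in (0:ℝ)..1, (Hf n (e n) 0 - Hf n (e n) 1) * τ ^ n := by
    have hcont : Continuous fun τ : ℝ => (Hf n (e n) 0 - Hf n (e n) 1) * τ ^ n := by fun_prop
    refine intervalIntegral.norm_integral_le_of_norm_le zero_le_one ?_
      (hcont.intervalIntegrable _ _)
    refine Eventually.of_forall ?_
    intro τ hτ
    have hτ0 : 0 ≤ τ := hτ.1.le
    have hτ1 : τ ≤ 1 := hτ.2
    have a0 : τ * x n ≤ x n := by nlinarith [hxn.1]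
    have a0' : 0 ≤ τ * x n := mul_nonneg hτ0 hxn.1.le
    have a1 := H_anti h a0' a0 hxn.2.le
    have a2 := H_anti h le_rfl a0' (by linarith [hxn.2])
    have a3 := H_anti h hxn.1.le hxn.2.le le_rfl
    rw [norm_mul, norm_mul, Real.norm_of_nonneg (by linarith : 0 ≤ _ - Hf n (e n) (x n)),
      Real.norm_of_nonneg (by positivity : 0 ≤ τ ^ n)]
    have a4 : ‖-1 + 2 * x n * τ‖ ≤ 1 := by
      rw [Real.norm_eq_abs, abs_le]
      constructor <;> nlinarith [hxn.2]
    have a5 : τ ^ n * ‖-1 + 2 * x n * τ‖ ≤ τ ^ n :=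
      mul_le_of_le_one_right (by positivity) a4
    exact mul_le_mul (by linarith) a5 (by positivity) (by linarith)
  rw [intervalIntegral.integral_const_mul, integral_pow] at hb
  have hH : 0 ≤ Hf n (e n) 0 - Hf n (e n) 1 := by
    linarith [H_anti h le_rfl zero_le_one le_rfl]
  rw [norm_mul, Real.norm_of_nonneg hN0.le]
  calc (n:ℝ) * ‖Df n (e n) (x n)‖
      ≤ n * ((Hf n (e n) 0 - Hf n (e n) 1) * ((1 ^ (n + 1) - 0 ^ (n + 1)) / ((n:ℝ) + 1))) :=
        mul_le_mul_of_nonneg_left hb hN0.le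
    _ = (Hf n (e n) 0 - Hf n (e n) 1) * (n / ((n:ℝ) + 1)) := by simp; ring
    _ ≤ (Hf n (e n) 0 - Hf n (e n) 1) * 1 := by
        refine mul_le_mul_of_nonneg_left ?_ hH
        rw [div_le_one (by positivity)]; linarith
    _ = _ := mul_one _

lemma Df_fine (he : Tendsto (fun n : ℕ => (n : ℝ) * e n) atTop (𝓝 2)) {x : ℕ → ℝ} {k : ℝ}
    (hk : 0 < k) (hx : ∀ᶠ n in atTop, 0 < x n ∧ x n < 1)
    (hxk : Tendsto (fun n : ℕ => (n : ℝ) * (1 - x n)) atTop (𝓝 k)) :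
    Tendsto (fun n : ℕ => (n : ℝ) ^ 2 * Df n (e n) (x n)) atTop
      (𝓝 (2 * ∫ τ in Ioi (0:ℝ), Real.exp (-k * τ) / (1 + τ) ^ 2)) := by
  have hx1 : Tendsto x atTop (𝓝 1) := by
    simpa using (tendsto_zero_of_scaled hxk).const_sub 1
  have key : Tendsto (fun n : ℕ => ∫ u in Ioi (0:ℝ),
      (Real.exp (-u) * Real.exp (-(u / n)) * (-1 + 2 * x n * Real.exp (-(u / n)))) *
      ((n : ℝ) * (Hf n (e n) (Real.exp (-(u / n)) * x n) - Hf n (e n) (x n)))) atTop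
      (𝓝 (∫ u in Ioi (0:ℝ), 2 * (Real.exp (-u) * Lfun k u))) := by
    have hbi : IntegrableOn (fun u : ℝ => (6 / k * ∫ v in Ioi (0:ℝ), Bd v)
        * (Real.exp (-u) * u ^ ((2:ℝ) - 1))) (Ioi 0) :=
      (Real.GammaIntegral_convergent (s := 2) (by norm_num)).const_mul _
    refine tendsto_integral_filter_of_dominated_convergence _ ?_ ?_ hbi ?_
    · filter_upwards [good_eventually he, hx] with n h hxn
      have hN0 : (0:ℝ) < n := by linarith [h.hN]
      have hm : AEMeasurable (fun u : ℝ => Hf n (e n) (Real.exp (-(u / n)) * x n))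
          (volume.restrict (Ioi 0)) := by
        refine aemeasurable_restrict_of_monotoneOn measurableSet_Ioi ?_
        intro a ha b hb hab
        have ha : 0 < a := ha
        have ht := one_sub_exp_pos hN0 ha
        have hE : Real.exp (-(b / n)) ≤ Real.exp (-(a / n)) := by
          apply Real.exp_le_exp.mpr
          have : a / n ≤ b / n := by gcongr
          linarith
        exact H_anti h (mul_nonneg (Real.exp_pos _).le hxn.1.le)
          (mul_le_mul_of_nonneg_right hE hxn.1.le) (by nlinarith [hxn.1, hxn.2])
      refine AEMeasurable.aestronglyMeasurable ?_
      refine AEMeasurable.mul (Measurable.aemeasurable (by fun_prop)) ?_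
      exact (hm.sub_const _).const_mul _
    · filter_upwards [good_eventually he, hx, diff_bound he hk hx hxk] with n h hxn hdb
      refine (ae_restrict_mem measurableSet_Ioi).mono ?_
      intro u hu
      have hu : 0 < u := hu
      have hN0 : (0:ℝ) < n := by linarith [h.hN]
      have ht0 := Real.exp_pos (-(u / n))
      have ht1 := one_sub_exp_pos hN0 hu
      have hy0 : 0 ≤ Real.exp (-(u / n)) * x n := mul_nonneg ht0.le hxn.1.le
      have hyx : Real.exp (-(u / n)) * x n ≤ x n := by nlinarith [hxn.1]
      have hd := H_diff h hy0 hyx hxn.2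
      have hd0 := H_anti h hy0 hyx hxn.2.le
      have hb := hdb u hu.le
      have hBI : 0 ≤ ∫ v in Ioi (0:ℝ), Bd v :=
        setIntegral_nonneg measurableSet_Ioi (fun v hv => Bd_nonneg hv)
      have hn1 : (n : ℝ) * (Hf n (e n) (Real.exp (-(u / n)) * x n) - Hf n (e n) (x n))
          ≤ 6 / k * u * ∫ v in Ioi (0:ℝ), Bd v := by
        calc _ ≤ (n : ℝ) * (e n * ((x n - Real.exp (-(u / n)) * x n) / (1 - x n))
              * ∫ v in Ioi (0:ℝ), Bd v) := mul_le_mul_of_nonneg_left hd hN0.le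
          _ = ((n : ℝ) * (e n * ((x n - Real.exp (-(u / n)) * x n) / (1 - x n))))
              * ∫ v in Ioi (0:ℝ), Bd v := by ring
          _ ≤ _ := mul_le_mul_of_nonneg_right hb hBI
      have hn0 : 0 ≤ (n : ℝ) * (Hf n (e n) (Real.exp (-(u / n)) * x n) - Hf n (e n) (x n)) :=
        mul_nonneg hN0.le (by linarith)
      have a4 : ‖-1 + 2 * x n * Real.exp (-(u / n))‖ ≤ 1 := by
        rw [Real.norm_eq_abs, abs_le]
        constructor <;> nlinarith [hxn.2]
      have a5 : ‖Real.exp (-u) * Real.exp (-(u / n)) * (-1 + 2 * x n * Real.exp (-(u / n)))‖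
          ≤ Real.exp (-u) := by
        rw [norm_mul, norm_mul, Real.norm_of_nonneg (Real.exp_pos (-u)).le,
          Real.norm_of_nonneg ht0.le, mul_assoc]
        refine mul_le_of_le_one_right (Real.exp_pos _).le ?_
        exact mul_le_one₀ (by linarith) (norm_nonneg _) a4
      rw [norm_mul, Real.norm_of_nonneg hn0]
      calc _ ≤ Real.exp (-u) * (6 / k * u * ∫ v in Ioi (0:ℝ), Bd v) :=
            mul_le_mul a5 hn1 hn0 (Real.exp_pos _).le
        _ = _ := by
            rw [show (2:ℝ) - 1 = 1 by norm_num, Real.rpow_one]; ring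
    · refine (ae_restrict_mem measurableSet_Ioi).mono ?_
      intro u hu
      have hu : 0 < u := hu
      have h1 := inner_tendsto he hk hx hxk hu
      have h2 := exp_div_tendsto u
      have h3 := ((h2.const_mul (Real.exp (-u))).mul
        (((hx1.const_mul 2).mul h2).const_add (-1))).mul h1
      rw [show Real.exp (-u) * 1 * (-1 + 2 * 1 * 1) * (2 * Lfun k u)
        = 2 * (Real.exp (-u) * Lfun k u) by ring] at h3
      exact h3
  rw [integral_const_mul, Q_eq hk, ← J_eq hk] at key
  refine key.congr' ?_
  filter_upwards [good_eventually he] with n h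
  have hN0 : (0:ℝ) < n := by linarith [h.hN]
  rw [Df, subst_exp hN0, ← integral_const_mul]
  refine setIntegral_congr_fun measurableSet_Ioi ?_
  intro u _
  have e1 : Real.exp (-(u / n)) ^ n = Real.exp (-u) := by
    rw [← Real.exp_nat_mul]; congr 1; field_simp
  simp only [e1]
  field_simp

end

lemma aCoef_tendsto : Tendsto (fun n : ℕ => (n : ℝ) * (-aCoef n)) atTop (𝓝 2) := by
  have h0 : Tendsto (fun n : ℕ => ((n : ℝ))⁻¹) atTop (𝓝 0) :=
    tendsto_inv_atTop_zero.comp tendsto_natCast_atTop_atTop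
  have h1 : Tendsto (fun n : ℕ => 2 - 4 * (((n : ℝ))⁻¹ * ((n : ℝ))⁻¹)) atTop (𝓝 2) := by
    simpa using ((h0.mul h0).const_mul 4).const_sub 2
  refine tendsto_of_tendsto_of_tendsto_of_le_of_le' h1 tendsto_const_nhds ?_ ?_
  · filter_upwards [eventually_ge_atTop 2] with n hn
    have hn' : (2:ℝ) ≤ n := by exact_mod_cast hn
    have hn0 : (0:ℝ) < n := by linarith
    have h := (aCoef_props hn').2.2.2.2
    calc 2 - 4 * (((n : ℝ))⁻¹ * ((n : ℝ))⁻¹) = n * (2 / n - 4 / (n:ℝ) ^ 3) := by field_simp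
      _ ≤ _ := mul_le_mul_of_nonneg_left h hn0.le
  · filter_upwards [eventually_ge_atTop 2] with n hn
    have hn' : (2:ℝ) ≤ n := by exact_mod_cast hn
    have hn0 : (0:ℝ) < n := by linarith
    have h := (aCoef_props hn').2.2.2.1
    calc (n:ℝ) * (-aCoef n) ≤ n * (2 / n) := mul_le_mul_of_nonneg_left h hn0.le
      _ = 2 := by field_simp

/-- second-order asymptotic expansion of the unique zeros `x_n ∈ (0,1)` of the
dispersion functions `ζ_n`: `x_n = 1 - κ/n + c_κ/n² + o(1/n²)`. -/
theorem zetaDisp_zero_asymptotics (A B : ℝ) (hA : 0 < A) (hAB : A + B < 0)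
    (xseq : ℕ → ℝ) (n₀ : ℕ)
    (hx : ∀ n : ℕ, n₀ ≤ n →
      xseq n ∈ Ioo (0:ℝ) 1 ∧ zetaDisp A B n (xseq n) = 0 ∧
      ∀ y ∈ Ioo (0:ℝ) 1, zetaDisp A B n y = 0 → y = xseq n) :
    (fun n : ℕ => xseq n - (1 - kap A B / n + ckap A B / (n : ℝ) ^ 2))
      =o[atTop] (fun n : ℕ => 1 / (n : ℝ) ^ 2) := by
  have hk : 0 < kap A B := by
    rw [kap]; exact div_pos (by linarith) hA
  have hck : ckap A B = kap A B ^ 2 - 2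
      + 2 * ∫ τ in Ioi (0:ℝ), Real.exp (-kap A B * τ) / (1 + τ) ^ 2 := rfl
  set k := kap A B with hkdef
  set J := ∫ τ in Ioi (0:ℝ), Real.exp (-k * τ) / (1 + τ) ^ 2 with hJ
  have he := aCoef_tendsto
  have hx01 : ∀ᶠ n in atTop, 0 < xseq n ∧ xseq n < 1 := by
    filter_upwards [eventually_ge_atTop n₀] with n hn
    exact (hx n hn).1
  have hH := H_tendsto he (y := xseq) (hx01.mono fun n h => ⟨h.1.le, h.2.le⟩)
  have hHpos := hH.eventually (lt_mem_nhds (show (0:ℝ) < 1 by norm_num))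
  have r1 : Tendsto (fun n : ℕ => (n:ℝ) / ((n:ℝ) + 1)) atTop (𝓝 1) :=
    tendsto_natCast_div_add_atTop 1
  have r2 : Tendsto (fun n : ℕ => (n:ℝ) / ((n:ℝ) + 2)) atTop (𝓝 1) :=
    tendsto_natCast_div_add_atTop 2
  have h0 : Tendsto (fun n : ℕ => ((n : ℝ))⁻¹) atTop (𝓝 0) :=
    tendsto_inv_atTop_zero.comp tendsto_natCast_atTop_atTop
  -- the equation
  have heq : ∀ᶠ n : ℕ in atTop,
      (n:ℝ) * (1 - xseq n) * (1 + (n:ℝ)⁻¹ * ((k + 1) * ((n:ℝ) / ((n:ℝ) + 1))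
          - 2 * ((n:ℝ) / ((n:ℝ) + 2))))
        = (k + 2) * ((n:ℝ) / ((n:ℝ) + 1)) - 2 * ((n:ℝ) / ((n:ℝ) + 2))
          - (n:ℝ) * Df n (-aCoef n) (xseq n) / Hf n (-aCoef n) (xseq n) := by
    filter_upwards [eventually_ge_atTop n₀, good_eventually he, hx01, hHpos] with n hn h hxn hHn
    have hz := zeta_eq hA h hxn.1 hxn.2 (hx n hn).2.1
    have hN0 : (0:ℝ) < n := by linarith [h.hN]
    set H := Hf n (-aCoef n) (xseq n)
    have hD : Df n (-aCoef n) (xseq n) = -(H * (1 - xseq n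
      - (k + 1) * (1 / ((n:ℝ) + 1)) * xseq n
      - 1 / ((n:ℝ) + 1) + 2 * xseq n * (1 / ((n:ℝ) + 2)))) := by linarith
    rw [hD]
    field_simp
    ring
  -- first order
  have hs : Tendsto (fun n : ℕ => (n:ℝ) * (1 - xseq n)) atTop (𝓝 k) := by
    have hR := ((r1.const_mul (k + 2)).sub (r2.const_mul 2)).sub
      ((Df_coarse he hx01).div hH one_ne_zero)
    have hM := (h0.mul ((r1.const_mul (k + 1)).sub (r2.const_mul 2))).const_add 1
    have hQ := hR.div hM (by norm_num)
    rw [show ((k + 2) * 1 - 2 * 1 - 0 / 1) / (1 + 0 * ((k + 1) * 1 - 2 * 1)) = k by ring] at hQ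
    refine hQ.congr' ?_
    filter_upwards [heq, hM.eventually_ne (by norm_num : 1 + 0 * ((k + 1) * 1 - 2 * 1) ≠ (0:ℝ))]
      with n hn hne
    simp only [Pi.div_apply]
    rw [← hn]
    exact mul_div_cancel_right₀ _ hne
  -- second order
  have hfine := (Df_fine he hk hx01 hs).div hH one_ne_zero
  have h2 := (((r1.const_mul (-(k + 2))).add (r2.const_mul 4)).sub hfine).sub
    (hs.mul ((r1.const_mul (k + 1)).sub (r2.const_mul 2)))
  have h3 : Tendsto (fun n : ℕ => (n:ℝ) * ((n:ℝ) * (1 - xseq n) - k)) atTop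
      (𝓝 (-ckap A B)) := by
    rw [hck]
    rw [show -(k + 2) * 1 + 4 * 1 - 2 * J / 1 - k * ((k + 1) * 1 - 2 * 1)
      = -(k ^ 2 - 2 + 2 * J) by ring] at h2
    refine h2.congr' ?_
    filter_upwards [heq, eventually_gt_atTop 0, hHpos] with n hn hn0 hHn
    have hN0 : (0:ℝ) < n := by exact_mod_cast hn0
    simp only [Pi.div_apply]
    set H := Hf n (-aCoef n) (xseq n)
    set D := Df n (-aCoef n) (xseq n)
    set s := (n:ℝ) * (1 - xseq n)
    have e1 : (n:ℝ) ^ 2 * D / H = n * (n * D / H) := by ring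
    have e2 : (n:ℝ) * D / H = (k + 2) * ((n:ℝ) / ((n:ℝ) + 1)) - 2 * ((n:ℝ) / ((n:ℝ) + 2))
      - s * (1 + (n:ℝ)⁻¹ * ((k + 1) * ((n:ℝ) / ((n:ℝ) + 1))
          - 2 * ((n:ℝ) / ((n:ℝ) + 2)))) := by linarith
    rw [e1, e2]
    field_simp
    ring
  rw [isLittleO_iff_tendsto']
  · have h4 := (h3.const_add (ckap A B)).neg
    rw [add_neg_cancel, neg_zero] at h4
    refine h4.congr' ?_
    filter_upwards [eventually_gt_atTop 0] with n hn0
    have hN0 : (0:ℝ) < n := by exact_mod_cast hn0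
    field_simp
    ring
  · filter_upwards [eventually_gt_atTop 0] with n hn0 h
    have hN0 : (0:ℝ) < n := by exact_mod_cast hn0
    have : 0 < 1 / (n:ℝ) ^ 2 := by positivity
    linarith
end

section
/- Let A>0 and B∈ℝ with A+B<0. For n≥n₀ let x_n∈(0,1) be the unique zero of ζ_n, set Ω_n=B/2+A/(4x_n), and set Ω̂_m=A/4+B/2−A(m+1)/(2m(m+2))−B/(2m) for integers m≥1. If n₀ is large enough (depending only on A and B), then Ω_n≠Ω̂_{n·p} for all n≥n₀ and all integers p≥1. Moreover, the equation κ=2∫₀^∞ e^{−κτ}(1+τ)^{−2}dτ has a unique solution κ_c∈(0,2), and whenever κ:=−2(A+B)/A>κ_c there exists n₀∈ℕ such that Ω_n≠Ω̂_m for all n,m≥n₀. -/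
open MeasureTheory Real Set

/-- The element `Ω̂_m = A/4 + B/2 - A(m+1)/(2m(m+2)) - B/(2m)` of the singular set. -/
noncomputable def OmHat (A B : ℝ) (m : ℕ) : ℝ :=
  A / 4 + B / 2 - A * ((m : ℝ) + 1) / (2 * m * ((m : ℝ) + 2)) - B / (2 * m)


noncomputable def Jint (b ε x : ℝ) : ℝ :=
  ∫ t in (0:ℝ)..1, t ^ (b - 1) * (1 - t) ^ (-ε) * (1 - x * t) ^ ε

noncomputable def qint (n : ℕ) : ℝ := ∫ t in (0:ℝ)..1, t ^ (n - 1) * (1 - t) ^ (-(1/2) : ℝ)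

lemma sing_int (r : ℝ) (hr : r < 1) :
    IntervalIntegrable (fun t : ℝ => (1 - t) ^ (-r)) volume 0 1 := by
  have h := (intervalIntegral.intervalIntegrable_rpow' (a := 0) (b := 1) (r := -r) (by linarith))
  have := h.comp_sub_left 1
  simpa using this.symm

/-- integrability of anything dominated by `(1-t)^(-r)` -/
lemma dom_int (r : ℝ) (hr : r < 1) (f : ℝ → ℝ) (hf : Measurable f) (C : ℝ)
    (h0 : ∀ t ∈ Ioo (0:ℝ) 1, |f t| ≤ C * (1 - t) ^ (-r)) :
    IntervalIntegrable f volume 0 1 := by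
  have h := (sing_int r hr).const_mul C
  rw [intervalIntegrable_iff_integrableOn_Ioo_of_le zero_le_one] at h ⊢
  refine Integrable.mono' h hf.aestronglyMeasurable ?_
  refine (ae_restrict_iff' measurableSet_Ioo).2 (Filter.Eventually.of_forall ?_)
  intro t ht
  exact h0 t ht

lemma mono_int {f g : ℝ → ℝ} (hf : IntervalIntegrable f volume 0 1)
    (hg : IntervalIntegrable g volume 0 1) (h : ∀ t ∈ Ioo (0:ℝ) 1, f t ≤ g t) :
    ∫ t in (0:ℝ)..1, f t ≤ ∫ t in (0:ℝ)..1, g t :=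
  intervalIntegral.integral_mono_on_of_le_Ioo zero_le_one hf hg h

lemma w_bound (b ε t : ℝ) (hb : 1 ≤ b) (hε : 0 < ε) (hε2 : ε ≤ 1/2) (ht : t ∈ Ioo (0:ℝ) 1) :
    0 < t ^ (b - 1) * (1 - t) ^ (-ε) ∧ t ^ (b - 1) * (1 - t) ^ (-ε) ≤ (1 - t) ^ (-(1/2) : ℝ) := by
  have h1 : 0 < 1 - t := by linarith [ht.2]
  refine ⟨mul_pos (rpow_pos_of_pos ht.1 _) (rpow_pos_of_pos h1 _), ?_⟩
  have h2 : t ^ (b - 1) ≤ 1 := rpow_le_one ht.1.le ht.2.le (by linarith)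
  have h3 : (1 - t) ^ (-ε) ≤ (1 - t) ^ (-(1/2) : ℝ) :=
    rpow_le_rpow_of_exponent_ge h1 (by linarith [ht.1]) (by linarith)
  have h4 := rpow_pos_of_pos h1 (-ε)
  nlinarith

/-- convexity bound -/
lemma w_bound2 (n : ℕ) (hn : 1 ≤ n) (b ε t : ℝ) (hb : (n:ℝ) ≤ b) (hε : 0 < ε) (hε2 : ε ≤ 1/2)
    (ht : t ∈ Ioo (0:ℝ) 1) :
    t ^ (b - 1) * (1 - t) ^ (-ε) ≤
      t ^ (b - 1) + 2 * ε * (t ^ (n - 1) * (1 - t) ^ (-(1/2) : ℝ)) := by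
  have h1 : 0 < 1 - t := by linarith [ht.2]
  have key : (1 - t) ^ (-ε) ≤ 1 + 2 * ε * (1 - t) ^ (-(1/2) : ℝ) := by
    have := Real.geom_mean_le_arith_mean2_weighted (w₁ := 1 - 2 * ε) (w₂ := 2 * ε) (p₁ := 1)
      (p₂ := (1 - t) ^ (-(1/2) : ℝ)) (by linarith) (by linarith) zero_le_one
      (rpow_nonneg h1.le _) (by ring)
    rw [one_rpow, one_mul, ← rpow_mul h1.le] at this
    have e : (-(1/2) : ℝ) * (2 * ε) = -ε := by ring
    rw [e] at this
    linarith
  have h2 : t ^ (b - 1) ≤ t ^ (n - 1) := by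
    rw [← rpow_natCast t (n-1)]
    apply rpow_le_rpow_of_exponent_ge ht.1 ht.2.le
    push_cast [hn]
    linarith
  have h3 := rpow_pos_of_pos ht.1 (b - 1)
  have h4 := rpow_pos_of_pos h1 (-(1/2) : ℝ)
  calc t ^ (b - 1) * (1 - t) ^ (-ε) ≤ t ^ (b - 1) * (1 + 2 * ε * (1 - t) ^ (-(1/2) : ℝ)) := by gcongr
    _ = t ^ (b - 1) + 2 * ε * (t ^ (b - 1) * (1 - t) ^ (-(1/2) : ℝ)) := by ring
    _ ≤ _ := by gcongr

lemma pow_facts (ε x t : ℝ) (hε : 0 < ε) (hx : x ∈ Icc (0:ℝ) 1) (ht : t ∈ Ioo (0:ℝ) 1) :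
    0 < 1 - x * t ∧ 0 < (1 - x * t) ^ ε ∧ (1 - x * t) ^ ε ≤ 1 := by
  have h1 : x * t < 1 := by nlinarith [hx.1, hx.2, ht.1, ht.2]
  have h2 : 0 ≤ x * t := mul_nonneg hx.1 ht.1.le
  exact ⟨by linarith, rpow_pos_of_pos (by linarith) _, rpow_le_one (by linarith) (by linarith) hε.le⟩

lemma J_integrable (b ε x : ℝ) (hb : 1 ≤ b) (hε : 0 < ε) (hε2 : ε ≤ 1/2) (hx : x ∈ Icc (0:ℝ) 1) :
    IntervalIntegrable (fun t : ℝ => t ^ (b - 1) * (1 - t) ^ (-ε) * (1 - x * t) ^ ε) volume 0 1 := by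
  apply dom_int (1/2) (by norm_num) _ (by fun_prop) 1
  intro t ht
  obtain ⟨h1, h2⟩ := w_bound b ε t hb hε hε2 ht
  obtain ⟨h3, h4, h5⟩ := pow_facts ε x t hε hx ht
  rw [abs_of_nonneg (by positivity), one_mul]
  nlinarith

lemma J_anti (b ε : ℝ) (hb : 1 ≤ b) (hε : 0 < ε) (hε2 : ε ≤ 1/2) :
    AntitoneOn (Jint b ε) (Icc 0 1) := by
  intro x hx y hy hxy
  apply mono_int (J_integrable b ε y hb hε hε2 hy) (J_integrable b ε x hb hε hε2 hx)
  intro t ht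
  have h1 := (w_bound b ε t hb hε hε2 ht).1
  have h2 := (pow_facts ε y t hε hy ht).1
  have : (1 - y * t) ^ ε ≤ (1 - x * t) ^ ε := by
    apply rpow_le_rpow h2.le _ hε.le
    nlinarith [ht.1]
  gcongr

lemma J_one (b ε : ℝ) (hb : 1 ≤ b) : Jint b ε 1 = 1 / b := by
  have : Jint b ε 1 = ∫ t in (0:ℝ)..1, t ^ (b - 1) := by
    unfold Jint
    apply intervalIntegral.integral_congr_Ioo_of_le zero_le_one
    intro t ht
    have h1 : 0 < 1 - t := by linarith [ht.2]
    simp only [one_mul]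
    rw [mul_assoc, ← rpow_add h1]
    simp
  rw [this, integral_rpow (by left; linarith)]
  simp only [sub_add_cancel]
  rw [one_rpow, zero_rpow (by linarith)]
  simp

lemma q_integrable (n : ℕ) :
    IntervalIntegrable (fun t : ℝ => t ^ (n - 1) * (1 - t) ^ (-(1/2) : ℝ)) volume 0 1 := by
  apply dom_int (1/2) (by norm_num) _ (by fun_prop) 1
  intro t ht
  have h1 : 0 < 1 - t := by linarith [ht.2]
  have h4 := rpow_pos_of_pos h1 (-(1/2) : ℝ)
  have h5 : t ^ (n-1) ≤ 1 := pow_le_one₀ ht.1.le ht.2.le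
  have h6 : 0 < t ^ (n-1) := pow_pos ht.1 _
  rw [abs_of_nonneg (by positivity)]
  gcongr

lemma q_nonneg (n : ℕ) : 0 ≤ qint n := by
  apply intervalIntegral.integral_nonneg zero_le_one
  intro t ht
  exact mul_nonneg (pow_nonneg ht.1 _) (rpow_nonneg (by linarith [ht.2]) _)

lemma q_tendsto : Filter.Tendsto qint Filter.atTop (nhds 0) := by
  have h : Filter.Tendsto qint Filter.atTop (nhds (∫ t in (0:ℝ)..1, (0:ℝ))) := by
    apply intervalIntegral.tendsto_integral_filter_of_dominated_convergence
      (fun t => (1 - t) ^ (-(1/2) : ℝ))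
    · filter_upwards with n
      exact Measurable.aestronglyMeasurable (by fun_prop)
    · filter_upwards with n
      filter_upwards with t ht
      rw [uIoc_of_le zero_le_one] at ht
      have h4 : 0 ≤ (1 - t) ^ (-(1/2) : ℝ) := rpow_nonneg (by linarith [ht.2]) _
      have h5 : t ^ (n-1) ≤ 1 := pow_le_one₀ ht.1.le ht.2
      have h6 : 0 < t ^ (n-1) := pow_pos ht.1 _
      rw [norm_of_nonneg (by positivity)]
      nlinarith
    · exact sing_int _ (by norm_num)
    · have : ∀ᵐ t : ℝ, t ≠ 1 := by simp [ae_iff, measure_singleton]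
      filter_upwards [this] with t ht1 ht
      rw [uIoc_of_le zero_le_one] at ht
      have h7 : t < 1 := lt_of_le_of_ne ht.2 ht1
      have := (tendsto_pow_atTop_nhds_zero_of_lt_one ht.1.le h7).comp
        (Filter.tendsto_sub_atTop_nat 1)
      simpa using this.mul_const ((1 - t) ^ (-(1/2) : ℝ))
  simpa using h

lemma rpow_int (b : ℝ) (hb : 1 ≤ b) :
    IntervalIntegrable (fun t : ℝ => t ^ (b - 1)) volume 0 1 :=
  intervalIntegral.intervalIntegrable_rpow' (by linarith)

lemma integral_rpow_b (b : ℝ) (hb : 1 ≤ b) : ∫ t in (0:ℝ)..1, t ^ (b - 1) = 1 / b := by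
  rw [integral_rpow (by left; linarith)]
  simp only [sub_add_cancel]
  rw [one_rpow, zero_rpow (by linarith)]
  simp

lemma J_zero_le (n : ℕ) (hn : 1 ≤ n) (b ε : ℝ) (hb : (n:ℝ) ≤ b) (hε : 0 < ε) (hε2 : ε ≤ 1/2) :
    Jint b ε 0 ≤ 1 / b + 2 * ε * qint n := by
  have hn' : (1:ℝ) ≤ n := by exact_mod_cast hn
  have hb1 : 1 ≤ b := by linarith
  rw [← integral_rpow_b b hb1, qint, ← intervalIntegral.integral_const_mul,
    ← intervalIntegral.integral_add (rpow_int b hb1) ((q_integrable n).const_mul _)]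
  apply mono_int (J_integrable b ε 0 hb1 hε hε2 (by simp))
    ((rpow_int b hb1).add ((q_integrable n).const_mul _))
  intro t ht
  have := w_bound2 n hn b ε t hb hε hε2 ht
  simpa using this

lemma J_zero_lt (b ε x : ℝ) (hb : 1 ≤ b) (hε : 0 < ε) (hε2 : ε ≤ 1/2) (hx : x ∈ Ioo (0:ℝ) 1) :
    Jint b ε x < Jint b ε 0 := by
  have hx' : x ∈ Icc (0:ℝ) 1 := ⟨hx.1.le, hx.2.le⟩
  have i0 := J_integrable b ε 0 hb hε hε2 (by simp)
  have ix := J_integrable b ε x hb hε hε2 hx'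
  rw [← sub_pos]
  unfold Jint
  rw [← intervalIntegral.integral_sub i0 ix]
  apply intervalIntegral.intervalIntegral_pos_of_pos_on (i0.sub ix) _ zero_lt_one
  intro t ht
  have h1 := (w_bound b ε t hb hε hε2 ht).1
  have h2 := (pow_facts ε x t hε hx' ht).1
  have h3 : (1 - x * t) ^ ε < 1 :=
    rpow_lt_one h2.le (by nlinarith [mul_pos hx.1 ht.1]) hε
  simp only [zero_mul, sub_zero, one_rpow]
  nlinarith

lemma J_concave (b ε x τ : ℝ) (hb : 1 ≤ b) (hε : 0 < ε) (hε2 : ε ≤ 1/2) (hx : x ∈ Icc (0:ℝ) 1)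
    (hτ : τ ∈ Icc (0:ℝ) 1) :
    (1 - τ) * Jint b ε 0 + τ * Jint b ε x ≤ Jint b ε (τ * x) := by
  have i0 := J_integrable b ε 0 hb hε hε2 (by simp)
  have ix := J_integrable b ε x hb hε hε2 hx
  have hτx : τ * x ∈ Icc (0:ℝ) 1 := ⟨mul_nonneg hτ.1 hx.1, by nlinarith [hτ.1, hτ.2, hx.1, hx.2]⟩
  have it := J_integrable b ε (τ * x) hb hε hε2 hτx
  unfold Jint
  rw [← intervalIntegral.integral_const_mul, ← intervalIntegral.integral_const_mul,
    ← intervalIntegral.integral_add (i0.const_mul _) (ix.const_mul _)]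
  apply mono_int ((i0.const_mul _).add (ix.const_mul _)) it
  intro t ht
  have h1 := (w_bound b ε t hb hε hε2 ht).1
  have h2 := (pow_facts ε x t hε hx ht).1
  have hc := (Real.concaveOn_rpow hε.le (by linarith : ε ≤ 1)).2
    (show (1:ℝ) ∈ Ici 0 by simp) (show (1 - x * t) ∈ Ici (0:ℝ) from h2.le)
    (show 0 ≤ 1 - τ by linarith [hτ.2]) hτ.1 (by ring)
  simp only [smul_eq_mul, one_rpow] at hc
  have e : (1 - τ) * 1 + τ * (1 - x * t) = 1 - τ * x * t := by ring
  rw [e] at hc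
  simp only [zero_mul, sub_zero, one_rpow]
  nlinarith

lemma HasSum.congr_fun' {f g : ℕ → ℝ} {a : ℝ} (h : HasSum f a) (e : ∀ j, g j = f j) : HasSum g a := by
  rw [show g = f from funext e]; exact h

lemma E_lemma (n : ℕ) (x h0 : ℝ) (h : ℝ → ℝ) (hx : x ∈ Ioo (0:ℝ) 1)
    (hi : IntervalIntegrable h volume 0 1)
    (h1 : ∀ τ ∈ Icc (0:ℝ) 1, 0 ≤ h τ ∧ h τ ≤ h0 ∧ (1 - τ) * h0 ≤ h τ) :
    |∫ τ in (0:ℝ)..1, h τ * τ ^ n * (-1 + 2 * x * τ)| ≤ h0 / (n + 1) ∧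
    (∫ τ in (0:ℝ)..1, h τ * τ ^ n * (-1 + 2 * x * τ)) ≤ (∫ τ in (0:ℝ)..1, h τ * τ ^ n) ∧
    (3/4 ≤ x → h0 * (2 * x / ((n + 2) * (n + 3)) - 1 / ((n + 1) * (n + 2)) - (2/3) ^ n) ≤
      ∫ τ in (0:ℝ)..1, h τ * τ ^ n * (-1 + 2 * x * τ)) := by
  have hi1 : IntervalIntegrable (fun τ => h τ * τ ^ n) volume 0 1 :=
    hi.mul_continuousOn (by fun_prop)
  have hi2 : IntervalIntegrable (fun τ => h τ * τ ^ n * (-1 + 2 * x * τ)) volume 0 1 :=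
    hi1.mul_continuousOn (by fun_prop)
  have hh0 : 0 ≤ h0 := by have := h1 0 (by simp); linarith
  have ub : (∫ τ in (0:ℝ)..1, h τ * τ ^ n * (-1 + 2 * x * τ)) ≤ (∫ τ in (0:ℝ)..1, h τ * τ ^ n) := by
    apply mono_int hi2 hi1
    intro τ hτ
    obtain ⟨a1, a2, a3⟩ := h1 τ ⟨hτ.1.le, hτ.2.le⟩
    have a4 : 0 ≤ h τ * τ ^ n := mul_nonneg a1 (pow_nonneg hτ.1.le _)
    nlinarith [mul_pos hx.1 hτ.1, mul_lt_one_of_nonneg_of_lt_one_left hx.1.le hx.2 hτ.2.le]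
  have lb : (∫ τ in (0:ℝ)..1, -(h τ * τ ^ n)) ≤
      (∫ τ in (0:ℝ)..1, h τ * τ ^ n * (-1 + 2 * x * τ)) := by
    apply mono_int hi1.neg hi2
    intro τ hτ
    obtain ⟨a1, a2, a3⟩ := h1 τ ⟨hτ.1.le, hτ.2.le⟩
    have a4 : 0 ≤ h τ * τ ^ n := mul_nonneg a1 (pow_nonneg hτ.1.le _)
    show -(h τ * τ ^ n) ≤ _
    nlinarith [mul_nonneg a4 (mul_pos hx.1 hτ.1).le]
  have ub2 : (∫ τ in (0:ℝ)..1, h τ * τ ^ n) ≤ h0 / (n + 1) := by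
    have : (∫ τ in (0:ℝ)..1, h0 * τ ^ n) = h0 / (n + 1) := by
      rw [intervalIntegral.integral_const_mul, integral_pow]; simp; ring
    rw [← this]
    apply mono_int hi1 (Continuous.intervalIntegrable (by fun_prop) _ _)
    intro τ hτ
    obtain ⟨a1, a2, a3⟩ := h1 τ ⟨hτ.1.le, hτ.2.le⟩
    have := pow_nonneg hτ.1.le n
    gcongr
  refine ⟨?_, ub, ?_⟩
  · rw [intervalIntegral.integral_neg] at lb
    rw [abs_le]
    constructor <;> linarith
  · intro hx34
    have : (∫ τ in (0:ℝ)..1, h0 * ((1 + 2 * x) * τ ^ (n+1) - τ ^ n - 2 * x * τ ^ (n+2) - (2/3) ^ n)) =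
        h0 * (2 * x / ((n + 2) * (n + 3)) - 1 / ((n + 1) * (n + 2)) - (2/3) ^ n) := by
      rw [intervalIntegral.integral_const_mul, intervalIntegral.integral_sub,
        intervalIntegral.integral_sub, intervalIntegral.integral_sub,
        intervalIntegral.integral_const_mul, intervalIntegral.integral_const_mul,
        integral_pow, integral_pow, integral_pow]
      · simp
        left
        have : (n:ℝ) + 1 ≠ 0 := by positivity
        have : (n:ℝ) + 2 ≠ 0 := by positivity
        have : (n:ℝ) + 3 ≠ 0 := by positivity
        have : (n:ℝ) + 1 + 1 ≠ 0 := by positivity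
        have : (n:ℝ) + 2 + 1 ≠ 0 := by positivity
        field_simp
        ring
      all_goals exact Continuous.intervalIntegrable (by fun_prop) _ _
    rw [← this]
    apply mono_int (Continuous.intervalIntegrable (by fun_prop) _ _) hi2
    intro τ hτ
    obtain ⟨a1, a2, a3⟩ := h1 τ ⟨hτ.1.le, hτ.2.le⟩
    have p0 := pow_nonneg hτ.1.le n
    have e : h0 * ((1 + 2 * x) * τ ^ (n+1) - τ ^ n - 2 * x * τ ^ (n+2) - (2/3) ^ n) =
      (1 - τ) * h0 * (τ ^ n * (-1 + 2 * x * τ)) - h0 * (2/3) ^ n := by ring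
    rw [e, mul_assoc]
    have p1 : (0:ℝ) ≤ (2/3) ^ n := by positivity
    rcases le_total 0 (-1 + 2 * x * τ) with c | c
    · have := mul_le_mul_of_nonneg_right a3 (mul_nonneg p0 c)
      nlinarith [mul_nonneg hh0 p1]
    · have c1 : τ ≤ 2/3 := by nlinarith [hτ.1]
      have c2 : τ ^ n ≤ (2/3) ^ n := pow_le_pow_left₀ hτ.1.le c1 n
      have c3 : h τ * (τ ^ n * (1 - 2 * x * τ)) ≤ h0 * (τ ^ n * (1 - 2 * x * τ)) := by
        apply mul_le_mul_of_nonneg_right a2 (mul_nonneg p0 (by linarith))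
      have c4 : τ ^ n * (τ * (1 - 2 * x * τ)) ≤ (2/3) ^ n * 1 := by
        apply mul_le_mul c2 _ (mul_nonneg hτ.1.le (by linarith)) p1
        nlinarith [hτ.1, hτ.2, mul_pos hx.1 hτ.1]
      have c5 := mul_le_mul_of_nonneg_left c4 hh0
      nlinarith

noncomputable def Dint (n : ℕ) (x τ : ℝ) : ℝ :=
  ∫ t in (0:ℝ)..1, t ^ (n - 1) * (Real.log (1 - τ * x * t) - Real.log (1 - x * t))

lemma log_int (n : ℕ) (x τ : ℝ) (hx : x ∈ Ioo (0:ℝ) 1) (hτ : τ ∈ Icc (0:ℝ) 1) :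
    IntervalIntegrable
      (fun t : ℝ => t ^ (n - 1) * (Real.log (1 - τ * x * t) - Real.log (1 - x * t))) volume 0 1 := by
  apply ContinuousOn.intervalIntegrable
  rw [uIcc_of_le zero_le_one]
  apply ContinuousOn.mul (by fun_prop)
  apply ContinuousOn.sub
  · apply ContinuousOn.log (by fun_prop)
    intro t ht
    have : τ * x * t < 1 := by
      have : τ * (x * t) ≤ x * t := mul_le_of_le_one_left (mul_nonneg hx.1.le ht.1) hτ.2
      have : x * t ≤ x := mul_le_of_le_one_right hx.1.le ht.2
      linarith [hx.2]
    linarith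
  · apply ContinuousOn.log (by fun_prop)
    intro t ht
    have : x * t ≤ x := mul_le_of_le_one_right hx.1.le ht.2
    linarith [hx.2]

lemma J_diff (n : ℕ) (hn : 1 ≤ n) (b ε x τ : ℝ) (hb : (n:ℝ) ≤ b) (hε : 0 < ε) (hε2 : ε ≤ 1/2)
    (hx : x ∈ Ioo (0:ℝ) 1) (hτ : τ ∈ Icc (0:ℝ) 1) :
    Jint b ε (τ * x) - Jint b ε x ≤ ε * (Dint n x τ + 2 * ε * ((1 - τ) / (1 - x)) * qint n) := by
  have hn' : (1:ℝ) ≤ n := by exact_mod_cast hn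
  have hb1 : 1 ≤ b := by linarith
  have hx' : x ∈ Icc (0:ℝ) 1 := ⟨hx.1.le, hx.2.le⟩
  have ix := J_integrable b ε x hb1 hε hε2 hx'
  have hτx : τ * x ∈ Icc (0:ℝ) 1 := ⟨mul_nonneg hτ.1 hx.1.le, by nlinarith [hτ.1, hτ.2, hx.1, hx.2]⟩
  have it := J_integrable b ε (τ * x) hb1 hε hε2 hτx
  have il := log_int n x τ hx hτ
  have iq := q_integrable n
  unfold Jint Dint qint
  rw [← intervalIntegral.integral_sub it ix, ← intervalIntegral.integral_const_mul,
    ← intervalIntegral.integral_add il (iq.const_mul _), ← intervalIntegral.integral_const_mul]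
  apply mono_int (it.sub ix) ((il.add (iq.const_mul _)).const_mul _)
  intro t ht
  have h1 := (w_bound b ε t hb1 hε hε2 ht).1
  have h2 := w_bound2 n hn b ε t hb hε hε2 ht
  obtain ⟨Q0, Q1, Q2⟩ := pow_facts ε x t hε hx' ht
  obtain ⟨P0, P1, P2⟩ := pow_facts ε (τ * x) t hε hτx ht
  set P := 1 - τ * x * t with hP
  set Q := 1 - x * t with hQ
  have hxt : 0 < x * t := mul_pos hx.1 ht.1
  have hPQ : Q ≤ P := by
    have : τ * (x * t) ≤ x * t := mul_le_of_le_one_left hxt.le hτ.2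
    rw [hP, hQ]; linarith
  have L0 : 0 ≤ Real.log P - Real.log Q := by
    have := Real.log_le_log Q0 hPQ
    linarith
  have d1 : P ^ ε - Q ^ ε ≤ ε * (Real.log P - Real.log Q) := by
    have e1 : Q ^ ε = P ^ ε * Real.exp (ε * (Real.log Q - Real.log P)) := by
      rw [Real.rpow_def_of_pos Q0, Real.rpow_def_of_pos P0, ← Real.exp_add]
      congr 1; ring
    have e2 := Real.add_one_le_exp (ε * (Real.log Q - Real.log P))
    rw [e1]
    have e3 : 0 ≤ ε * (Real.log P - Real.log Q) := mul_nonneg hε.le L0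
    have e4 : P ^ ε * (ε * (Real.log Q - Real.log P) + 1) ≤
      P ^ ε * Real.exp (ε * (Real.log Q - Real.log P)) := mul_le_mul_of_nonneg_left e2 P1.le
    nlinarith
  have d2 : Real.log P - Real.log Q ≤ (1 - τ) / (1 - x) := by
    rw [← Real.log_div P0.ne' Q0.ne']
    have := Real.log_le_sub_one_of_pos (div_pos P0 Q0)
    refine this.trans ?_
    rw [div_sub_one Q0.ne', div_le_div_iff₀ Q0 (by linarith [hx.2])]
    have e5 : P - Q = (1 - τ) * (x * t) := by rw [hP, hQ]; ring
    rw [e5, mul_assoc]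
    apply mul_le_mul_of_nonneg_left _ (by linarith [hτ.2])
    have : x * t ≤ x := mul_le_of_le_one_right hx.1.le ht.2.le
    rw [hQ]
    nlinarith [hx.2]
  have hnp : t ^ (b - 1) ≤ t ^ (n - 1) := by
    rw [← rpow_natCast t (n-1)]
    apply rpow_le_rpow_of_exponent_ge ht.1 ht.2.le
    push_cast [hn]
    linarith
  have s0 : 0 ≤ t ^ (n - 1) * (1 - t) ^ (-(1/2) : ℝ) :=
    mul_nonneg (pow_nonneg ht.1.le _) (rpow_nonneg (by linarith [ht.2]) _)
  set w := t ^ (b - 1) * (1 - t) ^ (-ε)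
  set s := t ^ (n - 1) * (1 - t) ^ (-(1/2) : ℝ)
  set L := Real.log P - Real.log Q
  calc w * P ^ ε - w * Q ^ ε = w * (P ^ ε - Q ^ ε) := by ring
    _ ≤ w * (ε * L) := by gcongr
    _ ≤ (t ^ (b - 1) + 2 * ε * s) * (ε * L) := by gcongr
    _ ≤ (t ^ (n - 1) + 2 * ε * s) * (ε * L) := by gcongr
    _ = ε * (t ^ (n - 1) * L + 2 * ε * L * s) := by ring
    _ ≤ ε * (t ^ (n - 1) * L + 2 * ε * ((1 - τ) / (1 - x)) * s) := by gcongr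

lemma geom_summable (x : ℝ) (hx : x ∈ Ioo (0:ℝ) 1) : Summable (fun j : ℕ => x ^ (j + 1)) :=
  (summable_nat_add_iff 1).2 (summable_geometric_of_lt_one hx.1.le hx.2)

lemma D_hasSum (n : ℕ) (hn : 1 ≤ n) (x τ : ℝ) (hx : x ∈ Ioo (0:ℝ) 1) (hτ : τ ∈ Icc (0:ℝ) 1) :
    HasSum (fun j : ℕ => x ^ (j + 1) * (1 - τ ^ (j + 1)) / ((j + 1) * (n + j + 1))) (Dint n x τ) := by
  have key := intervalIntegral.hasSum_integral_of_dominated_convergence (μ := volume) (a := 0) (b := 1)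
    (F := fun (j : ℕ) (t : ℝ) => x ^ (j + 1) * (1 - τ ^ (j + 1)) / (j + 1) * t ^ (n + j))
    (f := fun t : ℝ => t ^ (n - 1) * (Real.log (1 - τ * x * t) - Real.log (1 - x * t)))
    (fun j _ => x ^ (j + 1)) (fun j => Continuous.aestronglyMeasurable (by fun_prop)) ?_ ?_ ?_ ?_
  · refine key.congr_fun' ?_
    intro j
    rw [intervalIntegral.integral_const_mul, integral_pow]
    have : (n:ℝ) + j + 1 ≠ 0 := by positivity
    simp
    field_simp
  · intro j
    filter_upwards with t ht
    rw [uIoc_of_le zero_le_one] at ht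
    have a1 : 0 ≤ 1 - τ ^ (j+1) := by linarith [pow_le_one₀ hτ.1 hτ.2 (n := j+1)]
    have a2 : 1 - τ ^ (j+1) ≤ 1 := by linarith [pow_nonneg hτ.1 (j+1)]
    have a3 := pow_nonneg ht.1.le (n + j)
    have a4 : t ^ (n + j) ≤ 1 := pow_le_one₀ ht.1.le ht.2
    have a5 := pow_pos hx.1 (j+1)
    rw [norm_of_nonneg (by positivity)]
    calc x ^ (j + 1) * (1 - τ ^ (j + 1)) / (j + 1) * t ^ (n + j)
        ≤ x ^ (j+1) * 1 / 1 * 1 := by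
          gcongr
          linarith [(Nat.cast_nonneg j : (0:ℝ) ≤ j)]
      _ = x ^ (j+1) := by ring
  · filter_upwards with t _ using geom_summable x hx
  · exact intervalIntegrable_const
  · filter_upwards with t ht
    rw [uIoc_of_le zero_le_one] at ht
    have b1 : 0 ≤ x * t := mul_nonneg hx.1.le ht.1.le
    have b2 : x * t < 1 := lt_of_le_of_lt (mul_le_of_le_one_right hx.1.le ht.2) hx.2
    have b3 : 0 ≤ τ * x * t := by rw [mul_assoc]; exact mul_nonneg hτ.1 b1
    have b4 : τ * x * t < 1 := by
      rw [mul_assoc]; exact lt_of_le_of_lt (mul_le_of_le_one_left b1 hτ.2) b2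
    have s1 := Real.hasSum_pow_div_log_of_abs_lt_one (x := x * t) (by rwa [abs_of_nonneg b1])
    have s2 := Real.hasSum_pow_div_log_of_abs_lt_one (x := τ * x * t) (by rwa [abs_of_nonneg b3])
    have s3 := (s1.sub s2).mul_left (t ^ (n - 1))
    have e0 : t ^ (n - 1) * (-Real.log (1 - x * t) - -Real.log (1 - τ * x * t)) =
      t ^ (n - 1) * (Real.log (1 - τ * x * t) - Real.log (1 - x * t)) := by ring
    rw [e0] at s3
    refine s3.congr_fun' ?_
    · intro j
      have : t ^ (n + j) = t ^ (n - 1) * t ^ (j + 1) := by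
        rw [← pow_add]; congr 1; omega
      rw [this, mul_pow, mul_pow, mul_pow]
      ring

lemma D_int_hasSum (n : ℕ) (hn : 1 ≤ n) (x : ℝ) (hx : x ∈ Ioo (0:ℝ) 1) :
    HasSum (fun j : ℕ => x ^ (j + 1) / ((n + 1) * (n + j + 1) * (n + j + 2)))
      (∫ τ in (0:ℝ)..1, Dint n x τ * τ ^ n) := by
  have key := intervalIntegral.hasSum_integral_of_dominated_convergence (μ := volume) (a := 0) (b := 1)
    (F := fun (j : ℕ) (τ : ℝ) => x ^ (j + 1) * (1 - τ ^ (j + 1)) / ((j + 1) * (n + j + 1)) * τ ^ n)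
    (f := fun τ : ℝ => Dint n x τ * τ ^ n)
    (fun j _ => x ^ (j + 1)) (fun j => Continuous.aestronglyMeasurable (by fun_prop)) ?_ ?_ ?_ ?_
  · refine key.congr_fun' ?_
    intro j
    have e : ∀ τ : ℝ, x ^ (j + 1) * (1 - τ ^ (j + 1)) / ((j + 1) * (n + j + 1)) * τ ^ n =
      x ^ (j + 1) / ((j + 1) * (n + j + 1)) * (τ ^ n - τ ^ (n + j + 1)) := by
      intro τ; ring
    simp_rw [e]
    rw [intervalIntegral.integral_const_mul, intervalIntegral.integral_sub
      (Continuous.intervalIntegrable (by fun_prop) _ _)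
      (Continuous.intervalIntegrable (by fun_prop) _ _), integral_pow, integral_pow]
    have : (n:ℝ) + j + 1 ≠ 0 := by positivity
    have : (n:ℝ) + j + 2 ≠ 0 := by positivity
    have : (n:ℝ) + j + 1 + 1 ≠ 0 := by positivity
    have : (n:ℝ) + 1 ≠ 0 := by positivity
    have : (j:ℝ) + 1 ≠ 0 := by positivity
    simp
    field_simp
    ring
  · intro j
    filter_upwards with τ hτ
    rw [uIoc_of_le zero_le_one] at hτ
    have a1 : 0 ≤ 1 - τ ^ (j+1) := by linarith [pow_le_one₀ hτ.1.le hτ.2 (n := j+1)]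
    have a2 : 1 - τ ^ (j+1) ≤ 1 := by linarith [pow_nonneg hτ.1.le (j+1)]
    have a3 := pow_nonneg hτ.1.le n
    have a4 : τ ^ n ≤ 1 := pow_le_one₀ hτ.1.le hτ.2
    have a5 := pow_pos hx.1 (j+1)
    have a6 : (1:ℝ) ≤ (j + 1) * (n + j + 1) := by
      have : (0:ℝ) ≤ j := Nat.cast_nonneg j
      have : (0:ℝ) ≤ n := Nat.cast_nonneg n
      nlinarith
    rw [norm_of_nonneg (by positivity)]
    calc x ^ (j + 1) * (1 - τ ^ (j + 1)) / ((j + 1) * (n + j + 1)) * τ ^ n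
        ≤ x ^ (j+1) * 1 / 1 * 1 := by gcongr
      _ = x ^ (j+1) := by ring
  · filter_upwards with t _ using geom_summable x hx
  · exact intervalIntegrable_const
  · filter_upwards with τ hτ
    rw [uIoc_of_le zero_le_one] at hτ
    exact (D_hasSum n hn x τ hx ⟨hτ.1.le, hτ.2⟩).mul_right _

noncomputable def Iint (k : ℝ) : ℝ := ∫ τ in Ioi (0:ℝ), Real.exp (-k * τ) / (1 + τ) ^ 2

lemma Iint_integrable (k : ℝ) (hk : 0 < k) :
    IntegrableOn (fun τ : ℝ => Real.exp (-k * τ) / (1 + τ) ^ 2) (Ioi 0) := by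
  refine Integrable.mono' (exp_neg_integrableOn_Ioi 0 hk)
    (Measurable.aestronglyMeasurable (by fun_prop)) ?_
  refine (ae_restrict_iff' measurableSet_Ioi).2 (Filter.Eventually.of_forall ?_)
  intro t (ht : 0 < t)
  rw [norm_of_nonneg (by positivity)]
  apply div_le_self (Real.exp_pos _).le
  nlinarith

lemma Iint_anti {k l : ℝ} (hk : 0 < k) (hkl : k ≤ l) : Iint l ≤ Iint k := by
  apply setIntegral_mono_on (Iint_integrable l (by linarith)) (Iint_integrable k hk) measurableSet_Ioi
  intro t (ht : 0 < t)
  gcongr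

lemma Iint_pos {k : ℝ} (hk : 0 < k) : 0 < Iint k := by
  unfold Iint
  rw [setIntegral_pos_iff_support_of_nonneg_ae]
  · have : Function.support (fun τ : ℝ => Real.exp (-k * τ) / (1 + τ) ^ 2) ∩ Ioi 0 = Ioi 0 := by
      apply inter_eq_right.2
      intro t (ht : 0 < t)
      have : 0 < Real.exp (-k * t) / (1 + t) ^ 2 := by positivity
      exact this.ne'
    rw [this]; simp
  · filter_upwards with t
    simp only [Pi.zero_apply]
    positivity
  · exact Iint_integrable k hk

lemma Iint_two : Iint 2 ≤ 1 / 2 := by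
  have h : ∫ t in Ioi (0:ℝ), Real.exp (-2 * t) = 1 / 2 := by
    rw [integral_exp_mul_Ioi (by norm_num)]; simp
  rw [← h]
  apply setIntegral_mono_on (Iint_integrable 2 (by norm_num)) (exp_neg_integrableOn_Ioi 0 (by norm_num))
    measurableSet_Ioi
  intro t (ht : 0 < t)
  apply div_le_self (Real.exp_pos _).le
  nlinarith

lemma Iint_cont (k : ℝ) (hk : 0 < k) : ContinuousOn Iint (Icc k 2) := by
  unfold Iint
  apply continuousOn_of_dominated (bound := fun t => Real.exp (-k * t))
  · intro l _
    exact Measurable.aestronglyMeasurable (by fun_prop)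
  · intro l hl
    refine (ae_restrict_iff' measurableSet_Ioi).2 (Filter.Eventually.of_forall ?_)
    intro t (ht : 0 < t)
    rw [norm_of_nonneg (by positivity)]
    have : Real.exp (-l * t) / (1 + t) ^ 2 ≤ Real.exp (-l * t) := by
      apply div_le_self (Real.exp_pos _).le
      nlinarith
    refine this.trans ?_
    have := hl.1
    gcongr
  · exact exp_neg_integrableOn_Ioi 0 hk
  · filter_upwards with t
    fun_prop

lemma kc_exists : ∃ k : ℝ, k ∈ Ioo (0:ℝ) 2 ∧ k = 2 * Iint k ∧
    ∀ k' ∈ Ioo (0:ℝ) 2, k' = 2 * Iint k' → k' = k := by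
  set k0 := min 1 (Iint 1) with hk0
  have p0 : 0 < k0 := lt_min one_pos (Iint_pos one_pos)
  have p1 : k0 ≤ 1 := min_le_left _ _
  have p2 : k0 ≤ Iint 1 := min_le_right _ _
  have p3 : Iint 1 ≤ Iint k0 := Iint_anti p0 p1
  have hc : ContinuousOn (fun k => k - 2 * Iint k) (Icc k0 2) :=
    continuousOn_id.sub ((Iint_cont k0 p0).const_smul (2:ℝ))
  have := intermediate_value_Ioo (by linarith : k0 ≤ 2) hc
  have i2 := Iint_two
  obtain ⟨k, hk, hk'⟩ := this (show (0:ℝ) ∈ _ from ⟨by linarith [Iint_pos one_pos], by linarith⟩)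
  simp only at hk'
  have hkp : 0 < k := by linarith [hk.1]
  refine ⟨k, ⟨hkp, hk.2⟩, by linarith, ?_⟩
  intro l hl e
  rcases lt_trichotomy l k with c | c | c
  · have := Iint_anti hl.1 c.le; linarith
  · exact c
  · have := Iint_anti hkp c.le; linarith

lemma D_bound (n : ℕ) (hn : 1 ≤ n) (x k : ℝ) (hk : 0 < k) (hx : x ∈ Ioo (0:ℝ) 1)
    (hxk : x ≤ 1 - k / n) :
    (∫ τ in (0:ℝ)..1, Dint n x τ * τ ^ n) ≤ Iint k / (n * (n + 1)) := by
  have hn' : (0:ℝ) < n := by exact_mod_cast hn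
  have key := D_int_hasSum n hn x hx
  set f : ℝ → ℝ := fun s => (Real.exp (-k * ((n:ℝ)⁻¹ * s)) / (1 + (n:ℝ)⁻¹ * s) ^ 2) with hf
  have fi : IntegrableOn f (Ioi 0) := by
    have := (integrableOn_Ioi_comp_mul_left_iff
      (fun τ : ℝ => Real.exp (-k * τ) / (1 + τ) ^ 2) 0 (inv_pos.2 hn')).2
      (by simpa using Iint_integrable k hk)
    exact this
  have fI : ∫ s in Ioi (0:ℝ), f s = n * Iint k := by
    have := integral_comp_mul_left_Ioi (fun τ : ℝ => Real.exp (-k * τ) / (1 + τ) ^ 2) 0 (inv_pos.2 hn')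
    simp only [inv_inv, mul_zero, smul_eq_mul] at this
    exact this
  have fnn : ∀ s : ℝ, 0 ≤ f s := fun s => by simp only [hf]; positivity
  have xe : x ≤ Real.exp (-k * (n:ℝ)⁻¹) := by
    have := Real.add_one_le_exp (-k * (n:ℝ)⁻¹)
    refine hxk.trans (le_trans (le_of_eq ?_) this)
    rw [div_eq_mul_inv]; ring
  refine le_of_tendsto' key.tendsto_sum_nat ?_
  intro M
  have anti : AntitoneOn f (Icc 0 (0 + M)) := by
    intro s hs t ht hst
    simp only [hf]
    have := hs.1
    have h1 : (n:ℝ)⁻¹ * s ≤ (n:ℝ)⁻¹ * t := by gcongr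
    have h2 : 0 ≤ (n:ℝ)⁻¹ * s := by positivity
    apply div_le_div₀ (Real.exp_pos _).le _ (by positivity) (by gcongr)
    apply Real.exp_le_exp.2
    nlinarith
  have s1 := anti.sum_le_integral
  have s2 : ∫ s in (0:ℝ)..0 + M, f s ≤ n * Iint k := by
    rw [← fI, intervalIntegral.integral_of_le (by simp)]
    apply setIntegral_mono_set fi (Filter.Eventually.of_forall fnn)
    exact Filter.Eventually.of_forall (fun t ht => ht.1)
  have s3 : ∀ j : ℕ, x ^ (j + 1) / (((n:ℝ) + 1) * (n + j + 1) * (n + j + 2)) ≤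
      (1 / ((n:ℝ) ^ 2 * (n + 1))) * f (0 + ((j + 1 : ℕ) : ℝ)) := by
    intro j
    have e1 : f (0 + ((j + 1 : ℕ) : ℝ)) =
        Real.exp (-k * (n:ℝ)⁻¹) ^ (j + 1) * ((n:ℝ) ^ 2 / (n + j + 1) ^ 2) := by
      simp only [hf]
      rw [← Real.exp_nat_mul]
      have : -k * ((n:ℝ)⁻¹ * (0 + ((j + 1 : ℕ) : ℝ))) = ((j + 1 : ℕ) : ℝ) * (-k * (n:ℝ)⁻¹) := by ring
      rw [this]
      push_cast
      have : (n:ℝ) + j + 1 ≠ 0 := by positivity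
      field_simp
      ring_nf
    rw [e1]
    have e2 : (1 / ((n:ℝ) ^ 2 * (n + 1))) *
      (Real.exp (-k * (n:ℝ)⁻¹) ^ (j + 1) * ((n:ℝ) ^ 2 / (n + j + 1) ^ 2)) =
      Real.exp (-k * (n:ℝ)⁻¹) ^ (j + 1) / ((n + 1) * (n + j + 1) * (n + j + 1)) := by
      field_simp
    rw [e2]
    have := hx.1
    gcongr
    norm_num
  calc _ ≤ ∑ j ∈ Finset.range M, (1 / ((n:ℝ) ^ 2 * (n + 1))) * f (0 + ((j + 1 : ℕ) : ℝ)) :=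
        Finset.sum_le_sum (fun j _ => s3 j)
    _ = (1 / ((n:ℝ) ^ 2 * (n + 1))) * ∑ j ∈ Finset.range M, f (0 + ((j + 1 : ℕ) : ℝ)) := by
        rw [Finset.mul_sum]
    _ ≤ (1 / ((n:ℝ) ^ 2 * (n + 1))) * (n * Iint k) := by
        gcongr
        exact s1.trans s2
    _ = _ := by field_simp

lemma D_int (n : ℕ) (hn : 1 ≤ n) (x : ℝ) (hx : x ∈ Ioo (0:ℝ) 1) :
    IntervalIntegrable (fun τ => Dint n x τ) volume 0 1 := by
  apply AntitoneOn.intervalIntegrable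
  rw [uIcc_of_le zero_le_one]
  intro σ hσ τ hτ hst
  refine hasSum_le ?_ (D_hasSum n hn x τ hx hτ) (D_hasSum n hn x σ hx hσ)
  intro j
  have := hx.1
  have := hσ.1
  gcongr

/-- the packaged estimate -/
lemma main_est (n : ℕ) (hn : 4 ≤ n) (b ε x : ℝ) (hb : (n:ℝ) ≤ b) (hε : 0 < ε) (hbε : b * ε = 2)
    (hx : x ∈ Ioo (0:ℝ) 1) :
    ∃ E : ℝ, (∫ τ in (0:ℝ)..1, Jint b ε (τ * x) * τ ^ n * (-1 + 2 * x * τ)) =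
        Jint b ε x * (E - 1 / (n + 1) + 2 * x / (n + 2)) ∧
      |E| ≤ 4 * qint n / (n + 1) ∧
      (3/4 ≤ x → ((2/3 : ℝ) ^ n < 2 * (3/4) / ((n + 2) * (n + 3)) - 1 / ((n + 1) * (n + 2))) → 0 < E) ∧
      ∀ k : ℝ, 0 < k → x ≤ 1 - k / n → E ≤ (2 * Iint k + 8 * qint n / k) / (n * (n + 1)) := by
  have hn1 : 1 ≤ n := by omega
  have hn4 : (4:ℝ) ≤ n := by exact_mod_cast hn
  have hb1 : 1 ≤ b := by linarith
  have hεb : ε = 2 / b := by field_simp; linarith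
  have hε2 : ε ≤ 1/2 := by
    rw [hεb, div_le_iff₀ (by linarith)]; linarith
  have hx' : x ∈ Icc (0:ℝ) 1 := ⟨hx.1.le, hx.2.le⟩
  have hanti := J_anti b ε hb1 hε hε2
  have J1 := J_one b ε hb1
  have Jx1 : 1 / b ≤ Jint b ε x := by rw [← J1]; exact hanti hx' (by simp) hx.2.le
  have bp : 0 < b := by linarith
  have Jp : 0 < Jint b ε x := lt_of_lt_of_le (by positivity) Jx1
  have hmem : ∀ τ ∈ Icc (0:ℝ) 1, τ * x ∈ Icc (0:ℝ) 1 := fun τ hτ =>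
    ⟨mul_nonneg hτ.1 hx.1.le, mul_le_one₀ hτ.2 hx.1.le hx.2.le⟩
  have Ji : IntervalIntegrable (fun τ => Jint b ε (τ * x)) volume 0 1 := by
    apply AntitoneOn.intervalIntegrable
    rw [uIcc_of_le zero_le_one]
    intro σ hσ τ hτ hst
    exact hanti (hmem σ hσ) (hmem τ hτ) (mul_le_mul_of_nonneg_right hst hx.1.le)
  set h : ℝ → ℝ := fun τ => (Jint b ε (τ * x) - Jint b ε x) / Jint b ε x with hh
  have hi : IntervalIntegrable h volume 0 1 := (Ji.sub intervalIntegrable_const).div_const _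
  set h0 := (Jint b ε 0 - Jint b ε x) / Jint b ε x with hh0
  have h0pos : 0 < h0 := div_pos (sub_pos.2 (J_zero_lt b ε x hb1 hε hε2 hx)) Jp
  have hfacts : ∀ τ ∈ Icc (0:ℝ) 1, 0 ≤ h τ ∧ h τ ≤ h0 ∧ (1 - τ) * h0 ≤ h τ := by
    intro τ hτ
    refine ⟨?_, ?_, ?_⟩
    · apply div_nonneg _ Jp.le
      rw [sub_nonneg]
      exact hanti (hmem τ hτ) hx' (mul_le_of_le_one_left hx.1.le hτ.2)
    · apply div_le_div_of_nonneg_right _ Jp.le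
      have := hanti (by simp) (hmem τ hτ) (hmem τ hτ).1
      linarith
    · have := J_concave b ε x τ hb1 hε hε2 hx' hτ
      rw [hh0, ← mul_div_assoc]
      apply div_le_div_of_nonneg_right _ Jp.le
      linarith
  have h0le : h0 ≤ 4 * qint n := by
    have a := J_zero_le n hn1 b ε hb hε hε2
    rw [hh0, div_le_iff₀ Jp]
    have q0 := q_nonneg n
    have : Jint b ε 0 - Jint b ε x ≤ 2 * ε * qint n := by linarith
    refine this.trans ?_
    calc 2 * ε * qint n = 4 * qint n * (1 / b) := by rw [hεb]; ring
      _ ≤ _ := by gcongr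
  obtain ⟨e1, e2, e3⟩ := E_lemma n x h0 h hx hi hfacts
  refine ⟨∫ τ in (0:ℝ)..1, h τ * τ ^ n * (-1 + 2 * x * τ), ?_, ?_, ?_, ?_⟩
  · have c1 : ∀ τ : ℝ, Jint b ε (τ * x) * τ ^ n * (-1 + 2 * x * τ) =
        Jint b ε x * (h τ * τ ^ n * (-1 + 2 * x * τ) + (2 * x * τ ^ (n+1) - τ ^ n)) := by
      intro τ
      simp only [hh]
      field_simp
      ring
    simp_rw [c1]
    rw [intervalIntegral.integral_const_mul, intervalIntegral.integral_add, intervalIntegral.integral_sub,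
      intervalIntegral.integral_const_mul, integral_pow, integral_pow]
    · have : (n:ℝ) + 1 + 1 = n + 2 := by ring
      simp [this]
      left
      ring
    · exact Continuous.intervalIntegrable (by fun_prop) _ _
    · exact Continuous.intervalIntegrable (by fun_prop) _ _
    · exact (hi.mul_continuousOn (by fun_prop)).mul_continuousOn (by fun_prop)
    · exact Continuous.intervalIntegrable (by fun_prop) _ _
  · refine e1.trans ?_
    gcongr
  · intro hx34 hlt
    refine lt_of_lt_of_le (mul_pos h0pos ?_) (e3 hx34)
    have : 2 * (3/4) / (((n:ℝ) + 2) * (n + 3)) ≤ 2 * x / ((n + 2) * (n + 3)) := by gcongr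
    linarith
  · intro k hk hxk
    refine e2.trans ?_
    have q0 := q_nonneg n
    have x1 : 0 < 1 - x := by linarith [hx.2]
    have Di := D_int n hn1 x hx
    set C := 2 * ε * qint n / (1 - x) with hC
    have step : (∫ τ in (0:ℝ)..1, h τ * τ ^ n) ≤
        ∫ τ in (0:ℝ)..1, (2 * (Dint n x τ * τ ^ n) + 2 * C * (τ ^ n - τ ^ (n + 1))) := by
      apply mono_int (hi.mul_continuousOn (by fun_prop))
      · exact ((Di.mul_continuousOn (by fun_prop)).const_mul _).add
          (Continuous.intervalIntegrable (by fun_prop) _ _)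
      intro τ hτ
      have hτ' : τ ∈ Icc (0:ℝ) 1 := ⟨hτ.1.le, hτ.2.le⟩
      have jd := J_diff n hn1 b ε x τ hb hε hε2 hx hτ'
      have n0 := (hfacts τ hτ').1
      have hle : h τ ≤ 2 * Dint n x τ + 2 * C * (1 - τ) := by
        have f0 : 0 ≤ Jint b ε (τ * x) - Jint b ε x := by
          rw [sub_nonneg]
          exact hanti (hmem τ hτ') hx' (mul_le_of_le_one_left hx.1.le hτ'.2)
        calc h τ ≤ (Jint b ε (τ * x) - Jint b ε x) / (1 / b) := by
              simp only [hh]; gcongr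
          _ = b * (Jint b ε (τ * x) - Jint b ε x) := by field_simp
          _ ≤ b * (ε * (Dint n x τ + 2 * ε * ((1 - τ) / (1 - x)) * qint n)) := by gcongr
          _ = (b * ε) * (Dint n x τ + 2 * ε * ((1 - τ) / (1 - x)) * qint n) := by ring
          _ = _ := by rw [hbε, hC]; ring
      calc h τ * τ ^ n ≤ (2 * Dint n x τ + 2 * C * (1 - τ)) * τ ^ n :=
            mul_le_mul_of_nonneg_right hle (pow_nonneg hτ.1.le _)
        _ = _ := by ring
    refine step.trans ?_
    rw [intervalIntegral.integral_add ((Di.mul_continuousOn (by fun_prop)).const_mul _)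
          (Continuous.intervalIntegrable (by fun_prop) _ _),
      intervalIntegral.integral_const_mul, intervalIntegral.integral_const_mul,
      intervalIntegral.integral_sub (Continuous.intervalIntegrable (by fun_prop) _ _)
        (Continuous.intervalIntegrable (by fun_prop) _ _), integral_pow, integral_pow]
    have db := D_bound n hn1 x k hk hx hxk
    have Cle : 2 * C ≤ 8 * qint n / k := by
      have hk1 : k / n ≤ 1 - x := by linarith
      have hεn : ε ≤ 2 / n := by rw [hεb]; gcongr
      calc 2 * C ≤ 2 * (2 * (2 / n) * qint n / (k / n)) := by rw [hC]; gcongr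
        _ = _ := by field_simp; ring
    have i2 : (1 ^ (n + 1) - 0 ^ (n + 1) : ℝ) / (n + 1) - (1 ^ (n + 1 + 1) - 0 ^ (n + 1 + 1)) / (((n + 1 : ℕ):ℝ) + 1)
        = 1 / ((n + 2) * (n + 1)) := by
      simp
      have : (n:ℝ) + 1 + 1 ≠ 0 := by positivity
      field_simp
      ring
    rw [i2]
    have i3 : 1 / (((n:ℝ) + 2) * (n + 1)) ≤ 1 / (n * (n + 1)) := by
      gcongr
      linarith
    calc _ ≤ 2 * (Iint k / (n * (n + 1))) + (8 * qint n / k) * (1 / (n * (n + 1))) := by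
          have C0 : 0 ≤ C := by rw [hC]; positivity
          gcongr
      _ = _ := by ring

lemma zeta_eq_s17 (A B : ℝ) (hA : 0 < A) (n : ℕ) (hn : 4 ≤ n) (x : ℝ) (hx : x ∈ Ioo (0:ℝ) 1)
    (hz : zetaDisp A B n x = 0) :
    ∃ E : ℝ, x * (1 + kap A B / n + 2 / (n * (n + 2))) = 1 + E * (n + 1) / n ∧
      |E| ≤ 4 * qint n / (n + 1) ∧
      (3/4 ≤ x → ((2/3 : ℝ) ^ n < 2 * (3/4) / ((n + 2) * (n + 3)) - 1 / ((n + 1) * (n + 2))) → 0 < E) ∧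
      ∀ k : ℝ, 0 < k → x ≤ 1 - k / n → E ≤ (2 * Iint k + 8 * qint n / k) / (n * (n + 1)) := by
  have hn4 : (4:ℝ) ≤ n := by exact_mod_cast hn
  have sq : Real.sqrt ((n:ℝ) ^ 2 + 8) ^ 2 = (n:ℝ) ^ 2 + 8 := Real.sq_sqrt (by positivity)
  have sn : (n:ℝ) < Real.sqrt ((n:ℝ) ^ 2 + 8) := by
    apply Real.lt_sqrt_of_sq_lt; linarith
  have sn2 : Real.sqrt ((n:ℝ) ^ 2 + 8) < n + 2 := by
    rw [Real.sqrt_lt' (by linarith)]; nlinarith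
  have hb : (n:ℝ) ≤ bCoef n := by unfold bCoef; linarith
  have hε : 0 < -aCoef n := by unfold aCoef; linarith
  have hbε : bCoef n * -aCoef n = 2 := by
    unfold bCoef aCoef
    nlinarith
  have hbc : bCoef n < (n:ℝ) + 1 := by unfold bCoef; linarith
  have hab : (n:ℝ) + 1 - bCoef n - 1 = - -aCoef n := by unfold aCoef bCoef; ring
  have hb0 : 0 < bCoef n := by linarith
  obtain ⟨C, hC, hF⟩ : ∃ C : ℝ, 0 < C ∧ ∀ y, Fhyp n y = C * Jint (bCoef n) (-aCoef n) y := by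
    refine ⟨Real.Gamma ((n:ℝ) + 1) / (Real.Gamma (bCoef n) * Real.Gamma ((n:ℝ) + 1 - bCoef n)), ?_, ?_⟩
    · exact div_pos (Real.Gamma_pos_of_pos (by positivity))
        (mul_pos (Real.Gamma_pos_of_pos hb0) (Real.Gamma_pos_of_pos (by linarith)))
    · intro y
      unfold Fhyp hyper Jint
      rw [if_pos ⟨hbc, hb0⟩, hab]
  obtain ⟨E, h1, h2, h3, h4⟩ := main_est n hn (bCoef n) (-aCoef n) x hb hε hbε hx
  refine ⟨E, ?_, h2, h3, h4⟩
  unfold zetaDisp at hz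
  simp_rw [hF, mul_assoc C] at hz
  rw [intervalIntegral.integral_const_mul, h1] at hz
  have Jp : 0 < Jint (bCoef n) (-aCoef n) x := by
    have hε2 : -aCoef n ≤ 1/2 := by nlinarith
    have hb1 : 1 ≤ bCoef n := by linarith
    have := J_anti (bCoef n) (-aCoef n) hb1 hε hε2 (⟨hx.1.le, hx.2.le⟩ : x ∈ Icc (0:ℝ) 1)
      (by simp : (1:ℝ) ∈ Icc (0:ℝ) 1) hx.2.le
    rw [J_one _ _ hb1] at this
    exact lt_of_lt_of_le (by positivity) this
  have hz2 : (C * Jint (bCoef n) (-aCoef n) x) *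
      ((1 - x + (A + 2 * B) / (A * ((n : ℝ) + 1)) * x) + (E - 1 / (n + 1) + 2 * x / (n + 2))) = 0 := by
    rw [← hz]; ring
  have hz3 := (mul_eq_zero.1 hz2).resolve_left (mul_pos hC Jp).ne'
  unfold kap
  have : (n:ℝ) ≠ 0 := by positivity
  have : (n:ℝ) + 1 ≠ 0 := by positivity
  have : (n:ℝ) + 2 ≠ 0 := by positivity
  field_simp at hz3 ⊢
  linear_combination -hz3

lemma OmHat_eq (A B x : ℝ) (hA : 0 < A) (m : ℕ) (hm : 1 ≤ m) (hx : 0 < x)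
    (h : B / 2 + A / (4 * x) = OmHat A B m) :
    x * (1 + kap A B / m + 2 / (m * (m + 2))) = 1 := by
  unfold OmHat at h
  unfold kap
  have : (0:ℝ) < m := by exact_mod_cast hm
  field_simp at h ⊢
  linear_combination (-1/2) * h

lemma phi_anti (κ : ℝ) (hκ : 0 < κ) (m m' : ℕ) (hm : 1 ≤ m) (h : m ≤ m') :
    1 + κ / m' + 2 / ((m':ℝ) * (m' + 2)) ≤ 1 + κ / m + 2 / ((m:ℝ) * (m + 2)) := by
  have : (0:ℝ) < m := by exact_mod_cast hm
  have : (m:ℝ) ≤ m' := by exact_mod_cast h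
  gcongr

/-- separation between the eigenvalues `Ω_n = B/2 + A/(4x_n)` and the singular
set, and the critical threshold `κ_c ∈ (0,2)` for full separation. -/
theorem eigenvalue_singular_separation (A B : ℝ) (hA : 0 < A) (hAB : A + B < 0)
    (xseq : ℕ → ℝ) (N : ℕ)
    (hx : ∀ n : ℕ, N ≤ n →
      xseq n ∈ Ioo (0:ℝ) 1 ∧ zetaDisp A B n (xseq n) = 0 ∧
      ∀ y ∈ Ioo (0:ℝ) 1, zetaDisp A B n y = 0 → y = xseq n) :
    (∃ n₀ : ℕ, N ≤ n₀ ∧ ∀ n : ℕ, n₀ ≤ n → ∀ p : ℕ, 1 ≤ p →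
      B / 2 + A / (4 * xseq n) ≠ OmHat A B (n * p)) ∧
    ∃ κc : ℝ, κc ∈ Ioo (0:ℝ) 2 ∧
      κc = 2 * ∫ τ in Ioi (0:ℝ), Real.exp (-κc * τ) / (1 + τ) ^ 2 ∧
      (∀ κ' ∈ Ioo (0:ℝ) 2,
        κ' = 2 * (∫ τ in Ioi (0:ℝ), Real.exp (-κ' * τ) / (1 + τ) ^ 2) → κ' = κc) ∧
      (κc < kap A B →
        ∃ n₀ : ℕ, ∀ n : ℕ, n₀ ≤ n → ∀ m : ℕ, n₀ ≤ m →
          B / 2 + A / (4 * xseq n) ≠ OmHat A B m) := by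
  have hκ : 0 < kap A B := by
    unfold kap
    exact div_pos (by linarith) hA
  set κ := kap A B with hκdef
  have hE : ∀ n : ℕ, max N 4 ≤ n → ∃ E : ℝ,
      xseq n * (1 + κ / n + 2 / (n * (n + 2))) = 1 + E * (n + 1) / n ∧
      |E| ≤ 4 * qint n / (n + 1) ∧
      (3/4 ≤ xseq n → ((2/3 : ℝ) ^ n < 2 * (3/4) / ((n + 2) * (n + 3)) - 1 / ((n + 1) * (n + 2))) → 0 < E) ∧
      ∀ k : ℝ, 0 < k → xseq n ≤ 1 - k / n →
        E ≤ (2 * Iint k + 8 * qint n / k) / (n * (n + 1)) := by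
    intro n hn
    obtain ⟨h1, h2, -⟩ := hx n (le_trans (le_max_left _ _) hn)
    exact zeta_eq_s17 A B hA n (le_trans (le_max_right _ _) hn) _ h1 h2
  have evN : ∀ᶠ n : ℕ in Filter.atTop, max N 4 ≤ n := Filter.eventually_ge_atTop _
  -- two-sided crude bound
  have crude : ∀ n : ℕ, max N 4 ≤ n → |xseq n * (1 + κ / n + 2 / (n * (n + 2))) - 1| ≤ 4 * qint n / n := by
    intro n hn
    obtain ⟨E, h1, h2, -⟩ := hE n hn
    have n0 : (0:ℝ) < n := by
      have : 0 < n := by have := le_trans (le_max_right N 4) hn; omega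
      exact_mod_cast this
    rw [h1, add_sub_cancel_left, abs_div, abs_mul, abs_of_pos n0, abs_of_pos (by linarith : (0:ℝ) < n + 1)]
    apply div_le_div_of_nonneg_right _ n0.le
    rwa [le_div_iff₀ (by linarith)] at h2
  have qt := q_tendsto
  have xt : Filter.Tendsto xseq Filter.atTop (nhds 1) := by
    have l1 : Filter.Tendsto (fun n : ℕ => 1 - (κ + 6) / (n:ℝ)) Filter.atTop (nhds 1) := by
      simpa using (tendsto_const_div_atTop_nhds_zero_nat (κ + 6)).const_sub 1
    refine tendsto_of_tendsto_of_tendsto_of_le_of_le' l1 tendsto_const_nhds ?_ ?_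
    · filter_upwards [evN, qt.eventually_le_const (show (0:ℝ) < 1 by norm_num)] with n hn hq
      have c := (abs_le.1 (crude n hn)).1
      have n1 : (1:ℝ) ≤ n := by
        have : 1 ≤ n := by have := le_trans (le_max_right N 4) hn; omega
        exact_mod_cast this
      have n0 : (0:ℝ) < n := by linarith
      obtain ⟨x0, x1⟩ := (hx n (le_trans (le_max_left _ _) hn)).1
      have a1 : 2 / ((n:ℝ) * (n + 2)) ≤ 2 / n := by
        apply div_le_div_of_nonneg_left (by norm_num) n0
        nlinarith
      have a2 : 4 * qint n / n ≤ 4 / n := by gcongr; linarith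
      have a3 : xseq n * (κ / n + 2 / (n * (n + 2))) ≤ 1 * (κ / n + 2 / n) := by gcongr
      have a4 : (κ + 6) / (n:ℝ) = κ / n + 2 / n + 4 / n := by ring
      rw [a4]
      nlinarith
    · filter_upwards [evN] with n hn
      exact (hx n (le_trans (le_max_left _ _) hn)).1.2.le
  have evE : ∀ᶠ n : ℕ in Filter.atTop, 1 < xseq n * (1 + κ / n + 2 / (n * (n + 2))) := by
    have t3 := tendsto_pow_const_mul_const_pow_of_abs_lt_one 3
      (show |(2/3:ℝ)| < 1 by rw [abs_of_pos] <;> norm_num)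
    filter_upwards [evN, xt.eventually_const_le (show (3/4:ℝ) < 1 by norm_num),
      t3.eventually_lt_const (show (0:ℝ) < 1/16 by norm_num)] with n hn h34 h3
    obtain ⟨E, h1, -, h2, -⟩ := hE n hn
    have n4 : (4:ℝ) ≤ n := by exact_mod_cast le_trans (le_max_right N 4) hn
    have n0 : (0:ℝ) < n := by linarith
    have : 0 < E := by
      apply h2 h34
      have e1 : 2 * (3/4) / (((n:ℝ) + 2) * (n + 3)) - 1 / ((n + 1) * (n + 2)) =
        (n - 3) / (2 * ((n + 1) * (n + 2) * (n + 3))) := by field_simp; ring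
      rw [e1]
      have e2 : (2/3 : ℝ) ^ n < 1 / (16 * n ^ 3) := by
        rw [lt_div_iff₀ (by positivity)]; linarith
      refine e2.trans_le ?_
      have e3 : 2 * (((n:ℝ) + 1) * (n + 2) * (n + 3)) ≤ 2 * ((2 * n) * (2 * n) * (2 * n)) := by
        gcongr <;> linarith
      apply div_le_div₀ (by linarith) (by linarith) (by positivity)
      calc _ ≤ _ := e3
        _ = _ := by ring
    rw [h1]
    have : 0 < E * (n + 1) / n := by positivity
    linarith
  refine ⟨?_, ?_⟩
  · have ev2 : ∀ᶠ n : ℕ in Filter.atTop, 4 * qint n < xseq n * (κ / 2) := by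
      have a := qt.const_mul 4
      have b := xt.mul_const (κ / 2)
      exact a.eventually_lt b (by linarith)
    obtain ⟨n₀, hn₀⟩ := Filter.eventually_atTop.1 (evN.and (evE.and ev2))
    refine ⟨max n₀ N, le_max_right _ _, ?_⟩
    intro n hn p hp heq
    obtain ⟨hN, h1, h2⟩ := hn₀ n (le_trans (le_max_left _ _) hn)
    obtain ⟨x0, x1⟩ := (hx n (le_trans (le_max_left _ _) hN)).1
    have nn : 1 ≤ n := by have := le_trans (le_max_right N 4) hN; omega
    have n0 : (0:ℝ) < n := by exact_mod_cast nn
    have hm : 1 ≤ n * p := Nat.mul_pos nn hp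
    have e := OmHat_eq A B (xseq n) hA (n * p) hm x0 heq
    rw [← hκdef] at e
    rcases Nat.lt_or_ge p 2 with hp2 | hp2
    · have : p = 1 := by omega
      subst this
      rw [mul_one] at e
      linarith
    · have c := (abs_le.1 (crude n hN)).2
      have a1 := phi_anti κ hκ (n * 2) (n * p) (by omega) (Nat.mul_le_mul_left n hp2)
      have a2 : 1 + κ / ((n * 2 : ℕ):ℝ) + 2 / (((n * 2 : ℕ):ℝ) * (((n * 2 : ℕ):ℝ) + 2)) ≤
          1 + κ / n + 2 / (n * (n + 2)) - κ / 2 / n := by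
        push_cast
        have : 2 / ((n:ℝ) * 2 * (n * 2 + 2)) ≤ 2 / (n * (n + 2)) := by
          gcongr <;> linarith
        have : κ / ((n:ℝ) * 2) = κ / n - κ / 2 / n := by field_simp; ring
        linarith
      have a3 := mul_le_mul_of_nonneg_left (a1.trans a2) x0.le
      rw [e] at a3
      have a4 : 4 * qint n / n < xseq n * (κ / 2) / n := by gcongr
      have a5 : xseq n * (1 + κ / n + 2 / (n * (n + 2)) - κ / 2 / n) =
        xseq n * (1 + κ / n + 2 / (n * (n + 2))) - xseq n * (κ / 2) / n := by ring
      linarith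
  · obtain ⟨κc, hkc, hkc2, hkc3⟩ := kc_exists
    refine ⟨κc, hkc, hkc2, hkc3, ?_⟩
    intro hlt
    have kp := hkc.1
    have ev3 : ∀ᶠ n : ℕ in Filter.atTop, κc < κ * xseq n - 4 * qint n := by
      have a := (xt.const_mul κ).sub (qt.const_mul 4)
      exact a.eventually_const_lt (by linarith)
    have ev4 : ∀ᶠ n : ℕ in Filter.atTop, (κc + 8 * qint n / κc) * (1 + 1 / (n:ℝ)) < xseq n * κ := by
      have a := (((qt.const_mul 8).div_const κc).const_add κc).mul
        ((tendsto_const_div_atTop_nhds_zero_nat (1:ℝ)).const_add 1)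
      exact a.eventually_lt (xt.mul_const κ) (by simpa using hlt)
    obtain ⟨n₀, hn₀⟩ := Filter.eventually_atTop.1 (evN.and (evE.and (ev3.and ev4)))
    refine ⟨max n₀ 1, ?_⟩
    intro n hn m hm heq
    obtain ⟨hN, h1, h3, h4⟩ := hn₀ n (le_trans (le_max_left _ _) hn)
    obtain ⟨x0, x1⟩ := (hx n (le_trans (le_max_left _ _) hN)).1
    have nn : 1 ≤ n := le_trans (le_max_right _ _) hn
    have mm : 1 ≤ m := le_trans (le_max_right _ _) hm
    have n0 : (0:ℝ) < n := by exact_mod_cast nn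
    have e := OmHat_eq A B (xseq n) hA m mm x0 heq
    rw [← hκdef] at e
    rcases Nat.lt_or_ge n m with c | c
    · have a1 := phi_anti κ hκ (n + 1) m (by omega) c
      have a2 : 1 + κ / ((n + 1 : ℕ):ℝ) + 2 / (((n + 1 : ℕ):ℝ) * (((n + 1 : ℕ):ℝ) + 2)) ≤
          1 + κ / n + 2 / (n * (n + 2)) - κ / (n * (n + 1)) := by
        push_cast
        have : 2 / (((n:ℝ) + 1) * (n + 1 + 2)) ≤ 2 / (n * (n + 2)) := by
          gcongr <;> linarith
        have : κ / ((n:ℝ) + 1) = κ / n - κ / (n * (n + 1)) := by field_simp; ring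
        linarith
      have a3 := mul_le_mul_of_nonneg_left (a1.trans a2) x0.le
      rw [e] at a3
      obtain ⟨E, g1, -, -, g4⟩ := hE n hN
      have hxk : xseq n ≤ 1 - κc / n := by
        have cr := (abs_le.1 (crude n hN)).2
        have b1 : 0 ≤ xseq n * (2 / (n * (n + 2))) := by positivity
        have b2 : κc / n ≤ (κ * xseq n - 4 * qint n) / n := by gcongr
        have b3 : (κ * xseq n - 4 * qint n) / n = xseq n * (κ / n) - 4 * qint n / n := by ring
        nlinarith
      have g5 := g4 κc kp hxk
      rw [← hkc2] at g5
      have b4 : E * (n + 1) / n ≤ (κc + 8 * qint n / κc) / n / n := by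
        calc E * (n + 1) / n ≤ ((κc + 8 * qint n / κc) / (n * (n + 1))) * (n + 1) / n := by gcongr
          _ = _ := by field_simp
      have b5 : (κc + 8 * qint n / κc) / n / n < xseq n * (κ / (n * (n + 1))) := by
        have : (κc + 8 * qint n / κc) / n / n =
          ((κc + 8 * qint n / κc) * (1 + 1 / (n:ℝ))) / (n * (n + 1)) := by field_simp
        rw [this, ← mul_div_assoc]
        gcongr
      have b6 : xseq n * (1 + κ / n + 2 / (n * (n + 2)) - κ / (n * (n + 1))) =
        xseq n * (1 + κ / n + 2 / (n * (n + 2))) - xseq n * (κ / (n * (n + 1))) := by ring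
      linarith
    · have a1 := phi_anti κ hκ m n mm c
      have a3 := mul_le_mul_of_nonneg_left a1 x0.le
      linarith
end
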